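/- Let Q(x) = Σ_{ω∈Ω} q_ω e^{2πi x ω} be a Dirichlet series with q_ω ∈ ℂ, Σ_{ω∈Ω} |q_ω| < ∞, Ω a bounded countable subset of ℝ, whose entire extension Q(z) = Σ_{ω∈Ω} q_ω e^{2πi z ω} is not identically zero and has only real zeros, and let A = {a_n} be the multiset of zeros of Q counted with multiplicity. Then the Fourier transform of μ_A = Σ_n δ_{a_n} is a pure point measure μ̂_A = Σ_{γ∈Γ} b_γ δ_γ which satisfies Σ_{γ∈Γ, 0<γ<1} |b_γ|/γ < ∞ and log |μ̂_A|(B(0,r)) = o(r) as r → ∞. -/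

import Mathlib

open MeasureTheory Metric Filter Topology Complex SchwartzMap Bornology
open scoped ENNReal

noncomputable section

/-- A continuous function `g` is *Bohr almost periodic* if for every `ε > 0` its set of
`ε`-almost periods is relatively dense. -/
def IsBohrAP {V : Type*} [SeminormedAddCommGroup V] (g : V → ℂ) : Prop :=
  Continuous g ∧ ∀ ε : ℝ, 0 < ε → ∃ L : ℝ, 0 < L ∧ ∀ x : V, ∃ τ : V,
    dist τ x < L ∧ ∀ y : V, ‖g (y + τ) - g y‖ < ε

/-- A pure point complex measure on `V`, described by its (countably supported) mass function. -/
structure PPM (V : Type*) where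
  mass : V → ℂ
  countable : (Function.support mass).Countable

namespace PPM

variable {V : Type*}

/-- The total variation of a pure point measure, evaluated on a set. -/
def var (μ : PPM V) (A : Set V) : ℝ≥0∞ := ∑' x : A, (‖μ.mass x‖₊ : ℝ≥0∞)

/-- Pairing of a pure point measure with a test function: `∫ φ dμ = Σ_x μ{x}·φ(x)`. -/
def pair (μ : PPM V) (φ : V → ℂ) : ℂ := ∑' x, μ.mass x * φ x

/-- Convolution `(μ ⋆ ψ)(t) = ∫ ψ(t - x) dμ(x)`. -/
def conv [SubtractionMonoid V] (μ : PPM V) (ψ : V → ℂ) (t : V) : ℂ :=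
  ∑' x, μ.mass x * ψ (t - x)

end PPM

/-- Local finiteness of a pure point measure on `ℝ`. -/
def PPM.locFinite (μ : PPM ℝ) : Prop := ∀ r : ℝ, μ.var (ball 0 r) < ⊤

/-- The measure is a temperate distribution: it pairs (absolutely) with every Schwartz
function. -/
def PPM.temperate (μ : PPM ℝ) : Prop :=
  ∀ φ : SchwartzMap ℝ ℂ, Summable fun x => μ.mass x * φ x

/-- `ν` is the distributional Fourier transform of `μ`: `μ(φ̂) = ν(φ)` on test functions. -/
def IsFT (μ ν : PPM ℝ) : Prop :=
  ∀ φ : SchwartzMap ℝ ℂ, HasCompactSupport φ →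
    μ.pair ⇑(FourierTransform.fourierCLE ℂ (SchwartzMap ℝ ℂ) φ) = ν.pair ⇑φ

/-- The measure is integer-valued: `μ = Σ_n δ_{a_n}` for a multiset `A = {a_n}`, the mass of
each point being its multiplicity. -/
def PPM.natValued (μ : PPM ℝ) : Prop := ∀ x : ℝ, ∃ k : ℕ, μ.mass x = k

/-- The value at `z ∈ ℂ` of (the entire extension of) the Dirichlet series
`Σ_ω q_ω e^{2πi z ω}`. -/
def dserC (q : ℕ → ℂ) (ω : ℕ → ℝ) (z : ℂ) : ℂ :=
  ∑' i : ℕ, q i * Complex.exp (2 * Real.pi * Complex.I * z * (ω i : ℂ))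

/-- `μ` is the counting measure of the zero multiset of the entire function `Q`: the mass of
`μ` at each real point `x` is the multiplicity of `x` as a zero of `Q`. -/
def IsZeroCounting (Q : ℂ → ℂ) (μ : PPM ℝ) : Prop :=
  ∀ x : ℝ, ∃ (k : ℕ) (g : ℂ → ℂ), μ.mass x = k ∧ (∀ z, AnalyticAt ℂ g z) ∧ g x ≠ 0 ∧
    ∀ z : ℂ, Q z = (z - (x : ℂ)) ^ k * g z


namespace FQ

def E (γ : ℝ) (z : ℂ) : ℂ := Complex.exp (2 * Real.pi * Complex.I * z * (γ : ℂ))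

lemma norm_E (γ : ℝ) (z : ℂ) : ‖E γ z‖ = Real.exp (-(2 * Real.pi * γ * z.im)) := by
  unfold E
  rw [Complex.norm_exp]
  congr 1
  simp
  ring

lemma norm_E_real (γ x : ℝ) : ‖E γ (x : ℂ)‖ = 1 := by
  rw [norm_E]; simp

lemma E_ne (γ : ℝ) (z : ℂ) : E γ z ≠ 0 := Complex.exp_ne_zero _

lemma E_add (γ γ' : ℝ) (z : ℂ) : E (γ + γ') z = E γ z * E γ' z := by
  unfold E; rw [← Complex.exp_add]; congr 1; push_cast; ring

lemma E_add_arg (γ : ℝ) (z w : ℂ) : E γ (z + w) = E γ z * E γ w := by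
  unfold E; rw [← Complex.exp_add]; congr 1; ring

lemma E_zero (z : ℂ) : E 0 z = 1 := by simp [E]

lemma E_zero_arg (γ : ℝ) : E γ 0 = 1 := by simp [E]

lemma E_neg (γ : ℝ) (z : ℂ) : E (-γ) z = E γ (-z) := by
  unfold E; congr 1; push_cast; ring

lemma E_mul_neg (γ : ℝ) (z : ℂ) : E γ z * E (-γ) z = 1 := by
  rw [← E_add]; simp [E_zero]

lemma E_conj (γ x : ℝ) : (starRingEnd ℂ) (E γ (x : ℂ)) = E (-γ) (x : ℂ) := by
  unfold E; rw [← Complex.exp_conj]; congr 1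
  simp only [map_mul, Complex.conj_ofReal, Complex.conj_I, map_ofNat]
  push_cast; ring

lemma hs_congr {ι : Type*} {f g : ι → ℂ} {s t : ℂ} (h : HasSum f s) (e : ∀ i, g i = f i)
    (e' : t = s) : HasSum g t := by
  have : g = f := funext e
  rw [this, e']; exact h

lemma hasDerivAt_E (γ : ℝ) (z : ℂ) : HasDerivAt (E γ) (2 * Real.pi * I * γ * E γ z) z := by
  unfold E
  have h : HasDerivAt (fun z : ℂ => 2 * Real.pi * Complex.I * z * (γ : ℂ))
      (2 * Real.pi * I * γ) z := by
    have := ((hasDerivAt_id z).const_mul (2 * Real.pi * Complex.I : ℂ)).mul_const (γ : ℂ)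
    simpa using this
  have := h.cexp
  rw [mul_comm (2 * Real.pi * I * γ : ℂ)]; exact this

lemma differentiable_E (γ : ℝ) : Differentiable ℂ (E γ) :=
  fun z => (hasDerivAt_E γ z).differentiableAt

@[fun_prop]
lemma continuous_E (γ : ℝ) : Continuous (E γ) := (differentiable_E γ).continuous

/-- Sum-integral interchange with an arbitrary index type. -/
lemma hasSum_integral_gen {ι α : Type*} [MeasurableSpace α] {m : Measure α} (c : ι → ℂ)
    (f : ι → α → ℂ) (hc : Summable fun i => ‖c i‖) (B : ℝ)
    (hf : ∀ i, Integrable (f i) m) (hB : ∀ i, ∫ a, ‖f i a‖ ∂m ≤ B) :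
    HasSum (fun i => c i * ∫ a, f i a ∂m) (∫ a, ∑' i, c i * f i a ∂m) := by
  have hcount : (Function.support c).Countable := (Summable.of_norm hc).countable_support
  have : Countable (Function.support c) := hcount.to_subtype
  have key := hasSum_integral_of_summable_integral_norm (μ := m)
    (F := fun (i : Function.support c) a => c i * f i a) (fun i => (hf i).const_mul _) (by
      have : Summable fun i : Function.support c => ‖c i‖ * B :=
        (hc.subtype _).mul_right B
      refine Summable.of_nonneg_of_le (fun i => by positivity) (fun i => ?_) this
      simp only [norm_mul]
      rw [integral_const_mul]
      exact mul_le_mul_of_nonneg_left (hB i) (norm_nonneg _))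
  have e1 : (fun i : Function.support c => ∫ a, c i * f i a ∂m) =
      (fun i => c i * ∫ a, f i a ∂m) ∘ Subtype.val := by
    funext i; simp [integral_const_mul]
  rw [e1, hasSum_subtype_iff_of_support_subset] at key
  · have e3 : (fun a => ∑' i, c i * f i a) =
        fun a => ∑' i : Function.support c, c i * f i a := by
      funext a
      have : Function.support (fun i => c i * f i a) ⊆ Function.support c := by
        intro i hi; simp at hi ⊢; exact hi.1
      exact (tsum_subtype_eq_of_support_subset this).symm
    rw [e3]; exact key
  · intro i hi; simp at hi ⊢; exact hi.1

def Rep (S : Set ℝ) (X : Set ℂ) (F : ℂ → ℂ) (N : ℝ) : Prop :=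
  ∃ (ι : Type) (q : ι → ℂ) (w : ι → ℝ), (∀ i, w i ∈ S) ∧ (Summable fun i => ‖q i‖) ∧
    (∑' i, ‖q i‖) ≤ N ∧ ∀ z ∈ X, HasSum (fun i => q i * E (w i) z) (F z)

def Bdd (S : Set ℝ) (X : Set ℂ) : Prop := ∀ γ ∈ S, ∀ z ∈ X, ‖E γ z‖ ≤ 1

variable {S : Set ℝ} {X : Set ℂ} {F G : ℂ → ℂ} {N M : ℝ}

lemma Rep.mono (h : Rep S X F N) (hNM : N ≤ M) : Rep S X F M := by
  obtain ⟨ι, q, w, h1, h2, h3, h4⟩ := h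
  exact ⟨ι, q, w, h1, h2, h3.trans hNM, h4⟩

lemma Rep.congr (h : Rep S X F N) (hFG : ∀ z ∈ X, F z = G z) : Rep S X G N := by
  obtain ⟨ι, q, w, h1, h2, h3, h4⟩ := h
  exact ⟨ι, q, w, h1, h2, h3, fun z hz => hFG z hz ▸ h4 z hz⟩

lemma Rep.nonneg (h : Rep S X F N) : 0 ≤ N := by
  obtain ⟨ι, q, w, h1, h2, h3, h4⟩ := h
  exact (tsum_nonneg fun _ => norm_nonneg _).trans h3

lemma Rep.norm_le (h : Rep S X F N) (hB : Bdd S X) {z : ℂ} (hz : z ∈ X) : ‖F z‖ ≤ N := by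
  obtain ⟨ι, q, w, h1, h2, h3, h4⟩ := h
  rw [← (h4 z hz).tsum_eq]
  refine (tsum_of_norm_bounded h2.hasSum fun i => ?_).trans h3
  rw [norm_mul]
  exact mul_le_of_le_one_right (norm_nonneg _) (hB _ (h1 i) _ hz)

lemma Rep.const_mul (h : Rep S X F N) (a : ℂ) : Rep S X (fun z => a * F z) (‖a‖ * N) := by
  obtain ⟨ι, q, w, h1, h2, h3, h4⟩ := h
  refine ⟨ι, fun i => a * q i, w, h1, ?_, ?_, fun z hz => ?_⟩
  · simpa using h2.mul_left ‖a‖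
  · simp only [norm_mul, tsum_mul_left]
    exact mul_le_mul_of_nonneg_left h3 (norm_nonneg _)
  · simpa [mul_assoc] using (h4 z hz).mul_left a

lemma summ_term {ι : Type} {q : ι → ℂ} {w : ι → ℝ} (hB : Bdd S X) (h1 : ∀ i, w i ∈ S)
    (h2 : Summable fun i => ‖q i‖) {z : ℂ} (hz : z ∈ X) :
    Summable fun i => ‖q i * E (w i) z‖ := by
  refine Summable.of_nonneg_of_le (fun _ => norm_nonneg _) (fun i => ?_) h2
  rw [norm_mul]
  exact mul_le_of_le_one_right (norm_nonneg _) (hB _ (h1 i) _ hz)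

lemma Rep.mul (hB : Bdd S X) (hS : ∀ a ∈ S, ∀ b ∈ S, a + b ∈ S)
    (hF : Rep S X F N) (hG : Rep S X G M) : Rep S X (fun z => F z * G z) (N * M) := by
  have hN := hF.nonneg
  obtain ⟨ι, q, w, h1, h2, h3, h4⟩ := hF
  obtain ⟨κ, p, v, g1, g2, g3, g4⟩ := hG
  refine ⟨ι × κ, fun x => q x.1 * p x.2, fun x => w x.1 + v x.2,
    fun x => hS _ (h1 _) _ (g1 _), h2.mul_norm g2, ?_, fun z hz => ?_⟩
  · simp only [norm_mul]
    have := tsum_mul_tsum_of_summable_norm (f := fun i => ‖q i‖) (g := fun i => ‖p i‖)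
      (by simpa using h2) (by simpa using g2)
    rw [← this]
    exact mul_le_mul h3 g3 (tsum_nonneg fun _ => norm_nonneg _) hN
  · have hsm : Summable fun x : ι × κ => (q x.1 * E (w x.1) z) * (p x.2 * E (v x.2) z) :=
      summable_mul_of_summable_norm (f := fun i => q i * E (w i) z)
        (g := fun i => p i * E (v i) z) (summ_term hB h1 h2 hz) (summ_term hB g1 g2 hz)
    refine hs_congr (HasSum.mul (h4 z hz) (g4 z hz) hsm) (fun x => ?_) rfl
    simp only [E_add]; ring

lemma Rep.hasSum {κ : Type} {Fk : κ → ℂ → ℂ} {Nk : κ → ℝ} (hB : Bdd S X)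
    (h : ∀ k, Rep S X (Fk k) (Nk k)) (hN : HasSum Nk M)
    (hG : ∀ z ∈ X, HasSum (fun k => Fk k z) (G z)) : Rep S X G M := by
  choose ι q w h1 h2 h3 h4 using h
  have hs : Summable fun x : (k : κ) × ι k => ‖q x.1 x.2‖ := by
    rw [summable_sigma_of_nonneg (fun _ => norm_nonneg _)]
    exact ⟨h2, Summable.of_nonneg_of_le (fun k => tsum_nonneg fun _ => norm_nonneg _) h3
      hN.summable⟩
  refine ⟨(k : κ) × ι k, fun x => q x.1 x.2, fun x => w x.1 x.2, fun x => h1 _ _, hs, ?_,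
    fun z hz => ?_⟩
  · rw [hs.tsum_sigma' h2, ← hN.tsum_eq]
    exact Summable.tsum_le_tsum h3 hs.sigma hN.summable
  · exact HasSum.sigma_of_hasSum (hG z hz) (fun k => h4 k z hz)
      (Summable.of_norm (summ_term (q := fun x : (k : κ) × ι k => q x.1 x.2)
        (w := fun x : (k : κ) × ι k => w x.1 x.2) hB (fun x => h1 x.1 x.2) hs hz))

lemma Rep.add (hB : Bdd S X) (hF : Rep S X F N) (hG : Rep S X G M) :
    Rep S X (fun z => F z + G z) (N + M) := by
  refine Rep.hasSum (κ := Bool) (Fk := fun b => if b then F else G)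
    (Nk := fun b => if b then N else M) hB (fun b => ?_) ?_ (fun z hz => ?_)
  · cases b <;> simpa
  · have := hasSum_fintype (fun b : Bool => if b then N else M)
    simpa using this
  · have := hasSum_fintype (fun b : Bool => (if b then F else G) z)
    simpa using this

/-- coefficients collected by frequency -/
lemma canon {ι : Type} {q : ι → ℂ} {w : ι → ℝ} (h1 : ∀ i, w i ∈ S)
    (h2 : Summable fun i => ‖q i‖) :
    ∃ c : ℝ → ℂ, (∀ γ, c γ ≠ 0 → γ ∈ S) ∧ (Summable fun γ => ‖c γ‖) ∧
      (∑' γ, ‖c γ‖) ≤ ∑' i, ‖q i‖ ∧ ∀ (f : ℝ → ℂ) (s : ℂ),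
        HasSum (fun i => q i * f (w i)) s → HasSum (fun γ => c γ * f γ) s := by
  have hq : Summable q := Summable.of_norm h2
  have hfib := h2.hasSum.tsum_fiberwise w
  have hle : ∀ γ, ‖∑' b : (w ⁻¹' {γ} : Set ι), q b‖ ≤ ∑' b : (w ⁻¹' {γ} : Set ι), ‖q b‖ :=
    fun γ => norm_tsum_le_tsum_norm (h2.subtype _)
  have hs : Summable fun γ => ‖∑' b : (w ⁻¹' {γ} : Set ι), q b‖ :=
    Summable.of_nonneg_of_le (fun _ => norm_nonneg _) hle hfib.summable
  refine ⟨fun γ => ∑' b : (w ⁻¹' {γ} : Set ι), q b, fun γ hγ => ?_, hs, ?_, fun f s hf => ?_⟩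
  · by_contra hcon
    apply hγ
    have : IsEmpty (w ⁻¹' {γ} : Set ι) := by
      constructor
      rintro ⟨i, hi⟩
      exact hcon (by simpa using hi ▸ h1 i)
    exact tsum_empty
  · rw [← hfib.tsum_eq]
    exact Summable.tsum_le_tsum hle hs hfib.summable
  · have := hf.tsum_fiberwise w
    refine hs_congr this (fun γ => ?_) rfl
    rw [← tsum_mul_right]
    congr 1
    funext b
    have : w b = γ := b.2
    rw [this]

lemma Rep.canon (h : Rep S X F N) : ∃ c : ℝ → ℂ, (∀ γ, c γ ≠ 0 → γ ∈ S) ∧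
    (Summable fun γ => ‖c γ‖) ∧ (∑' γ, ‖c γ‖) ≤ N ∧
    ∀ z ∈ X, HasSum (fun γ => c γ * E γ z) (F z) := by
  obtain ⟨ι, q, w, h1, h2, h3, h4⟩ := h
  obtain ⟨c, a1, a2, a3, a4⟩ := FQ.canon h1 h2
  exact ⟨c, a1, a2, a3.trans h3, fun z hz => a4 (fun γ => E γ z) _ (h4 z hz)⟩

lemma mean_E (γ : ℝ) : Tendsto (fun T : ℝ => (1 / T : ℂ) * ∫ x in (0:ℝ)..T, E γ x) atTop
    (𝓝 (if γ = 0 then 1 else 0)) := by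
  split_ifs with h
  · subst h
    refine tendsto_const_nhds.congr' ?_
    filter_upwards [eventually_gt_atTop 0] with T hT
    have : (T : ℂ) ≠ 0 := by exact_mod_cast hT.ne'
    simp [E_zero, this]
  · have hc : (2 * Real.pi * I * γ : ℂ) ≠ 0 := by
      simp [Real.pi_ne_zero, h]
    rw [tendsto_zero_iff_norm_tendsto_zero]
    have hlim : Tendsto (fun T : ℝ => (1 / T) * (2 / ‖(2 * Real.pi * I * γ : ℂ)‖)) atTop (𝓝 0) := by
      simpa using (tendsto_inv_atTop_zero (𝕜 := ℝ)).mul_const (2 / ‖(2 * Real.pi * I * γ : ℂ)‖)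
    refine squeeze_zero' (Eventually.of_forall fun _ => norm_nonneg _) ?_ hlim
    filter_upwards [eventually_gt_atTop 0] with T hT
    have e : ∀ x : ℝ, E γ x = Complex.exp ((2 * Real.pi * I * γ) * x) := by
      intro x; unfold E; congr 1; ring
    simp_rw [e]
    rw [integral_exp_mul_complex hc, norm_mul, norm_div _ (2 * Real.pi * I * γ : ℂ)]
    have : ‖(1 / T : ℂ)‖ = 1 / T := by simp [abs_of_pos hT]
    rw [this]
    gcongr
    rw [← e, ← e]
    refine (norm_sub_le _ _).trans ?_
    rw [norm_E_real, norm_E_real]; norm_num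

/-- Bohr coefficients. -/
lemma mean_coeff {c : ℝ → ℂ} (hc : Summable fun γ => ‖c γ‖) {f : ℝ → ℂ}
    (hf : ∀ x : ℝ, HasSum (fun γ => c γ * E γ x) (f x)) (γ₀ : ℝ) :
    Tendsto (fun T : ℝ => (1 / T : ℂ) * ∫ x in (0:ℝ)..T, f x * E (-γ₀) x) atTop
      (𝓝 (c γ₀)) := by
  have hlim := tendsto_tsum_of_dominated_convergence (𝓕 := (atTop : Filter ℝ))
    (f := fun T γ => c γ * ((1 / T : ℂ) * ∫ x in (0:ℝ)..T, E (γ - γ₀) x))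
    (g := fun γ => c γ * (if γ - γ₀ = 0 then 1 else 0)) hc
    (fun γ => (mean_E (γ - γ₀)).const_mul _) (by
      filter_upwards [eventually_gt_atTop 0] with T hT γ
      rw [norm_mul]
      refine mul_le_of_le_one_right (norm_nonneg _) ?_
      rw [norm_mul]
      have h1 : ‖(1 / T : ℂ)‖ = 1 / T := by simp [abs_of_pos hT]
      have h2 : ‖∫ x in (0:ℝ)..T, E (γ - γ₀) x‖ ≤ 1 * |T - 0| :=
        intervalIntegral.norm_integral_le_of_norm_le_const
          (fun x _ => (norm_E_real _ _).le)
      rw [h1]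
      rw [sub_zero, abs_of_pos hT, one_mul] at h2
      calc 1 / T * ‖∫ x in (0:ℝ)..T, E (γ - γ₀) x‖ ≤ 1 / T * T := by gcongr
        _ = 1 := by field_simp)
  have h0 : (∑' γ, c γ * (if γ - γ₀ = 0 then 1 else 0)) = c γ₀ := by
    rw [tsum_eq_single γ₀]
    · simp
    · intro γ hγ; simp [sub_ne_zero.mpr hγ]
  rw [h0] at hlim
  refine hlim.congr' ?_
  filter_upwards [eventually_gt_atTop 0] with T hT
  have hi := hasSum_integral_gen (m := volume.restrict (Set.Ioc 0 T)) c
    (fun γ (x : ℝ) => E (γ - γ₀) x) hc T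
    (fun γ => (((continuous_E (γ - γ₀)).comp Complex.continuous_ofReal).integrableOn_Icc).mono_set
      Set.Ioc_subset_Icc_self)
    (fun γ => by simp [norm_E_real, hT.le])
  have e2 : ∀ x : ℝ, (∑' γ, c γ * E (γ - γ₀) x) = f x * E (-γ₀) x := by
    intro x
    rw [← (hf x).tsum_eq, ← tsum_mul_right]
    congr 1; funext γ; rw [sub_eq_add_neg, E_add]; ring
  simp_rw [e2] at hi
  rw [intervalIntegral.integral_of_le hT.le, ← hi.tsum_eq, ← tsum_mul_left]
  congr 1; funext γ
  rw [intervalIntegral.integral_of_le hT.le]; ring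

lemma coeff_le {c : ℝ → ℂ} (hc : Summable fun γ => ‖c γ‖) {f : ℝ → ℂ}
    (hf : ∀ x : ℝ, HasSum (fun γ => c γ * E γ x) (f x)) {K : ℝ} (hK : ∀ x, ‖f x‖ ≤ K) (γ₀ : ℝ) :
    ‖c γ₀‖ ≤ K := by
  refine le_of_tendsto (mean_coeff hc hf γ₀).norm ?_
  filter_upwards [eventually_gt_atTop 0] with T hT
  rw [norm_mul]
  have h1 : ‖(1 / T : ℂ)‖ = 1 / T := by simp [abs_of_pos hT]
  have h2 : ‖∫ x in (0:ℝ)..T, f x * E (-γ₀) x‖ ≤ K * |T - 0| :=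
    intervalIntegral.norm_integral_le_of_norm_le_const
      (fun x _ => by rw [norm_mul, norm_E_real, mul_one]; exact hK x)
  rw [sub_zero, abs_of_pos hT] at h2
  rw [h1]
  calc 1 / T * ‖∫ x in (0:ℝ)..T, f x * E (-γ₀) x‖ ≤ 1 / T * (K * T) := by gcongr
    _ = K := by field_simp

end FQ

namespace FQ

def X0 : Set ℂ := Set.range ((↑) : ℝ → ℂ)

lemma bdd0 : Bdd Set.univ X0 := by
  rintro γ - _ ⟨x, rfl⟩
  exact (norm_E_real γ x).le

lemma univ_add : ∀ a ∈ (Set.univ : Set ℝ), ∀ b ∈ (Set.univ : Set ℝ), a + b ∈ (Set.univ : Set ℝ) :=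
  fun _ _ _ _ => Set.mem_univ _

lemma rep_of_coeff {c : ℝ → ℂ} (hc : Summable fun γ => ‖c γ‖) {F : ℂ → ℂ} {X : Set ℂ}
    (hF : ∀ z ∈ X, HasSum (fun γ => c γ * E γ z) (F z)) :
    Rep Set.univ X F (∑' γ, ‖c γ‖) :=
  ⟨ℝ, c, id, fun _ => Set.mem_univ _, hc, le_rfl, hF⟩

lemma hasSum_fin {f : ℝ → ℂ} (s : Finset ℝ) (hf : ∀ γ, γ ∉ s → f γ = 0) :
    HasSum f (∑ γ ∈ s, f γ) := hasSum_sum_of_ne_finset_zero hf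

lemma trig_pow (s : Finset ℝ) (p : ℝ → ℂ) (k : ℕ) : ∃ (T : Finset ℝ) (d : ℝ → ℂ),
    T.card ≤ (k + 1) ^ s.card ∧ ∀ z : ℂ, (∑ γ ∈ s, p γ * E γ z) ^ k = ∑ γ ∈ T, d γ * E γ z := by
  classical
  let g : (s → ℕ) → ℝ := fun n => ∑ j : s, (n j : ℝ) * (j : ℝ)
  let T : ℕ → Finset ℝ := fun k => (Fintype.piFinset (fun _ : s => Finset.range (k + 1))).image g
  refine ⟨T k, ?_⟩
  suffices h : ∃ d : ℝ → ℂ, ∀ z : ℂ, (∑ γ ∈ s, p γ * E γ z) ^ k = ∑ γ ∈ T k, d γ * E γ z by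
    obtain ⟨d, hd⟩ := h
    refine ⟨d, ?_, hd⟩
    refine Finset.card_image_le.trans ?_
    simp [Fintype.card_piFinset]
  induction k with
  | zero =>
    refine ⟨fun γ => if γ = 0 then 1 else 0, fun z => ?_⟩
    have h0 : (0 : ℝ) ∈ T 0 := by
      simp only [T, Finset.mem_image]
      exact ⟨fun _ => 0, by simp, by simp [g]⟩
    rw [Finset.sum_eq_single_of_mem 0 h0]
    · simp [E_zero]
    · intro b _ hb; simp [hb]
  | succ k ih =>
    obtain ⟨d, hd⟩ := ih
    refine ⟨fun η => ∑ x ∈ T k ×ˢ s with x.1 + x.2 = η, d x.1 * p x.2, fun z => ?_⟩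
    have hmap : ∀ x ∈ T k ×ˢ s, x.1 + x.2 ∈ T (k + 1) := by
      rintro ⟨a, b⟩ hx
      rw [Finset.mem_product] at hx
      obtain ⟨ha, hb⟩ := hx
      simp only [T, Finset.mem_image] at ha ⊢
      obtain ⟨n, hn, rfl⟩ := ha
      refine ⟨fun j => n j + if j = ⟨b, hb⟩ then 1 else 0, ?_, ?_⟩
      · simp only [Fintype.mem_piFinset, Finset.mem_range] at hn ⊢
        intro j
        have := hn j
        split_ifs <;> omega
      · simp only [g]
        push_cast
        simp_rw [add_mul]
        rw [Finset.sum_add_distrib]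
        simp
    rw [pow_succ, hd, Finset.sum_mul_sum, ← Finset.sum_product',
      ← Finset.sum_fiberwise_of_maps_to hmap]
    refine Finset.sum_congr rfl fun η _ => ?_
    rw [Finset.sum_mul]
    refine Finset.sum_congr rfl fun x hx => ?_
    rw [← (Finset.mem_filter.mp hx).2, E_add]; ring

lemma pow_rep (s : Finset ℝ) (p : ℝ → ℂ) {K : ℝ} (hK0 : 0 ≤ K)
    (hK : ∀ x : ℝ, ‖∑ γ ∈ s, p γ * E γ x‖ ≤ K) (k : ℕ) :
    Rep Set.univ X0 (fun z => (∑ γ ∈ s, p γ * E γ z) ^ k) ((k + 1) ^ s.card * K ^ k) := by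
  classical
  obtain ⟨T, d, hT, hd⟩ := trig_pow s p k
  let c : ℝ → ℂ := fun γ => if γ ∈ T then d γ else 0
  have hcs : Summable fun γ => ‖c γ‖ :=
    summable_of_ne_finset_zero (s := T) (fun γ hγ => by simp [c, hγ])
  have hsum : ∀ z : ℂ, HasSum (fun γ => c γ * E γ z) ((∑ γ ∈ s, p γ * E γ z) ^ k) := by
    intro z
    rw [hd]
    have := hasSum_fin T (f := fun γ => c γ * E γ z)
      (fun γ hγ => by simp [c, hγ])
    refine hs_congr this (fun _ => rfl) (Finset.sum_congr rfl fun γ hγ => by simp [c, hγ])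
  refine (rep_of_coeff hcs (fun z _ => hsum z)).mono ?_
  have hle : ∀ γ, ‖c γ‖ ≤ K ^ k :=
    coeff_le hcs (f := fun x : ℝ => (∑ γ ∈ s, p γ * E γ x) ^ k) (fun x => hsum x) (fun x => by
      rw [norm_pow]; exact pow_le_pow_left₀ (norm_nonneg _) (hK x) k)
  rw [tsum_eq_sum (s := T) (fun γ hγ => by simp [c, hγ])]
  calc ∑ γ ∈ T, ‖c γ‖ ≤ ∑ γ ∈ T, K ^ k := Finset.sum_le_sum fun γ _ => hle γ
    _ = T.card * K ^ k := by simp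
    _ ≤ _ := by
      gcongr
      exact_mod_cast hT

lemma rep_one : Rep Set.univ X0 (fun _ => 1) 1 :=
  ⟨Unit, fun _ => 1, fun _ => 0, fun _ => Set.mem_univ _, Summable.of_finite, by simp,
    fun z _ => by
      simp [E_zero]⟩

lemma Rep.pow0 {F : ℂ → ℂ} {N : ℝ} (h : Rep Set.univ X0 F N) (k : ℕ) :
    Rep Set.univ X0 (fun z => F z ^ k) (N ^ k) := by
  induction k with
  | zero => simpa using rep_one
  | succ k ih =>
    simp_rw [pow_succ]
    exact Rep.mul bdd0 univ_add ih h

lemma Rep.split {F : ℂ → ℂ} {N η : ℝ} (h : Rep Set.univ X0 F N) (hη : 0 < η) :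
    ∃ (s : Finset ℝ) (p : ℝ → ℂ) (R : ℂ → ℂ), Rep Set.univ X0 R η ∧
      ∀ z ∈ X0, F z = (∑ γ ∈ s, p γ * E γ z) + R z := by
  classical
  obtain ⟨c, -, hc, -, hF⟩ := h.canon
  obtain ⟨s, hs⟩ := ((tendsto_order.1 (tendsto_tsum_compl_atTop_zero (fun γ => ‖c γ‖))).2 η
    hη).exists
  let c' : ℝ → ℂ := fun γ => if γ ∈ s then 0 else c γ
  have hc's : Summable fun γ => ‖c' γ‖ := by
    refine Summable.of_nonneg_of_le (fun _ => norm_nonneg _) (fun γ => ?_) hc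
    simp only [c']; split_ifs <;> simp
  have hsum : ∀ z ∈ X0, Summable fun γ => c' γ * E γ z := fun z hz =>
    Summable.of_norm (summ_term (S := Set.univ) (w := id) bdd0 (fun _ => Set.mem_univ _) hc's hz)
  refine ⟨s, c, fun z => ∑' γ, c' γ * E γ z,
    (rep_of_coeff hc's (fun z hz => (hsum z hz).hasSum)).mono ?_, fun z hz => ?_⟩
  · refine le_trans (le_of_eq ?_) hs.le
    rw [← tsum_subtype_eq_of_support_subset (s := {x | x ∉ s})]
    · congr 1; funext ⟨γ, hγ⟩
      have : γ ∉ s := hγ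
      simp [c', this]
    · intro γ hγ; simp [c'] at hγ ⊢; exact hγ.1
  · have h1 := hasSum_fin s
      (f := fun γ => if γ ∈ s then c γ * E γ z else 0) (fun γ hγ => by simp [hγ])
    have h2 := h1.add (hsum z hz).hasSum
    have h3 := hs_congr h2 (g := fun γ => c γ * E γ z) (fun γ => by
      by_cases hγ : γ ∈ s <;> simp [c', hγ]) rfl
    rw [(hF z hz).unique h3]
    congr 1
    exact Finset.sum_congr rfl fun γ hγ => by simp [hγ]

lemma Rep.pow_bound {F : ℂ → ℂ} {N ρ r : ℝ} (h : Rep Set.univ X0 F N) (hρ : 0 ≤ ρ) (hr : ρ < r)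
    (hF : ∀ z ∈ X0, ‖F z‖ ≤ ρ) : ∃ d : ℕ, ∀ n : ℕ,
    Rep Set.univ X0 (fun z => F z ^ n) ((n + 1 : ℝ) ^ d * r ^ n) := by
  obtain ⟨s, p, R, hR, hFR⟩ := h.split (η := (r - ρ) / 2) (by linarith)
  set η := (r - ρ) / 2 with hη
  have hη0 : 0 ≤ η := by rw [hη]; linarith
  have hP : ∀ x : ℝ, ‖∑ γ ∈ s, p γ * E γ x‖ ≤ ρ + η := by
    intro x
    have hx : (x : ℂ) ∈ X0 := ⟨x, rfl⟩
    have : (∑ γ ∈ s, p γ * E γ x) = F x - R x := by rw [hFR _ hx]; ring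
    rw [this]
    exact (norm_sub_le _ _).trans (add_le_add (hF _ hx) (hR.norm_le bdd0 hx))
  refine ⟨s.card, fun n => ?_⟩
  have hterm : ∀ m : Fin (n + 1), Rep Set.univ X0
      (fun z => (n.choose m : ℂ) * ((∑ γ ∈ s, p γ * E γ z) ^ (m : ℕ) * R z ^ (n - m)))
      ((n.choose m : ℝ) * (((m : ℕ) + 1 : ℝ) ^ s.card * (ρ + η) ^ (m : ℕ) * η ^ (n - m))) := by
    intro m
    have := (Rep.mul bdd0 univ_add (pow_rep s p (by positivity) hP m) (hR.pow0 (n - m))).const_mul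
      (n.choose m : ℂ)
    simpa using this
  have := Rep.hasSum bdd0 hterm (hasSum_fintype _) (fun z _ => hasSum_fintype _)
  refine (this.mono ?_).congr (fun z hz => ?_)
  · rw [Fin.sum_univ_eq_sum_range (fun m => (n.choose m : ℝ) *
      ((m + 1 : ℝ) ^ s.card * (ρ + η) ^ m * η ^ (n - m)))]
    have hr' : r = (ρ + η) + η := by rw [hη]; ring
    rw [hr', add_pow _ η n, Finset.mul_sum]
    refine Finset.sum_le_sum fun m hm => ?_
    have hm' : m ≤ n := by simpa [Nat.lt_succ_iff] using hm
    have : ((m : ℝ) + 1) ^ s.card ≤ ((n : ℝ) + 1) ^ s.card := by gcongr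
    calc (n.choose m : ℝ) * ((m + 1 : ℝ) ^ s.card * (ρ + η) ^ m * η ^ (n - m))
        ≤ (n.choose m : ℝ) * ((n + 1 : ℝ) ^ s.card * (ρ + η) ^ m * η ^ (n - m)) := by gcongr
      _ = _ := by ring
  · rw [hFR z hz, add_pow, Fin.sum_univ_eq_sum_range (fun m => (n.choose m : ℂ) *
      ((∑ γ ∈ s, p γ * E γ z) ^ m * R z ^ (n - m)))]
    refine Finset.sum_congr rfl fun m _ => ?_
    ring

lemma Rep.conj {F : ℂ → ℂ} {N : ℝ} (h : Rep Set.univ X0 F N) :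
    Rep Set.univ X0 (fun z => (starRingEnd ℂ) (F z)) N := by
  obtain ⟨ι, q, w, h1, h2, h3, h4⟩ := h
  refine ⟨ι, fun i => (starRingEnd ℂ) (q i), fun i => - w i, fun _ => Set.mem_univ _,
    by simpa using h2, by simpa using h3, ?_⟩
  rintro _ ⟨x, rfl⟩
  have := (h4 x ⟨x, rfl⟩).star
  refine hs_congr this (fun i => ?_) rfl
  rw [← E_conj]; simp

/-- Wiener lemma. -/
lemma wiener {F : ℂ → ℂ} {N δ : ℝ} (hF : Rep Set.univ X0 F N) (hδ : 0 < δ)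
    (hlow : ∀ z ∈ X0, δ ≤ ‖F z‖) : ∃ M, Rep Set.univ X0 (fun z => 1 / F z) M := by
  have hN : δ ≤ N := (hlow 0 ⟨0, by simp⟩).trans (hF.norm_le bdd0 ⟨0, by simp⟩)
  have hN0 : 0 < N := hδ.trans_le hN
  have hG := Rep.mul bdd0 univ_add hF.conj hF
  have hh := Rep.add bdd0 rep_one (hG.const_mul (-(1 / N ^ 2 : ℝ)))
  set f : ℂ → ℂ := fun z => 1 + (-(1 / N ^ 2 : ℝ) : ℂ) * ((starRingEnd ℂ) (F z) * F z) with hf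
  have hfr : ∀ z, f z = ((1 - ‖F z‖ ^ 2 / N ^ 2 : ℝ) : ℂ) := by
    intro z
    simp only [hf]
    rw [mul_comm ((starRingEnd ℂ) (F z)), Complex.mul_conj, Complex.normSq_eq_norm_sq]
    push_cast; ring
  set ρ : ℝ := 1 - δ ^ 2 / N ^ 2 with hρ
  have hρ0 : 0 ≤ ρ := by
    rw [hρ, sub_nonneg, div_le_one (by positivity)]
    exact pow_le_pow_left₀ hδ.le hN 2
  have hρ1 : ρ < 1 := by
    rw [hρ]; have : 0 < δ ^ 2 / N ^ 2 := by positivity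
    linarith
  have hfn : ∀ z ∈ X0, ‖f z‖ ≤ ρ := by
    intro z hz
    rw [hfr, Complex.norm_real, Real.norm_eq_abs, abs_of_nonneg]
    · rw [hρ]
      have : δ ^ 2 / N ^ 2 ≤ ‖F z‖ ^ 2 / N ^ 2 := by
        gcongr; exact hlow z hz
      linarith
    · rw [sub_nonneg, div_le_one (by positivity)]
      exact pow_le_pow_left₀ (norm_nonneg _) (hF.norm_le bdd0 hz) 2
  obtain ⟨d, hd⟩ := Rep.pow_bound hh hρ0 (show ρ < (1 + ρ) / 2 by linarith) hfn
  set r := (1 + ρ) / 2 with hr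
  have hr0 : 0 < r := by rw [hr]; linarith
  have hr1 : r < 1 := by rw [hr]; linarith
  have hsumm : Summable fun n : ℕ => ((n : ℝ) + 1) ^ d * r ^ n := by
    have := summable_pow_mul_geometric_of_norm_lt_one d (r := r)
      (by rw [Real.norm_eq_abs, abs_of_pos hr0]; exact hr1)
    have h2 := ((summable_nat_add_iff 1).2 this).mul_left (1 / r)
    refine h2.congr fun n => ?_
    push_cast
    field_simp
    ring
  have hinv := Rep.hasSum bdd0 hd hsumm.hasSum (G := fun z => (1 - f z)⁻¹) (fun z hz =>
    hasSum_geometric_of_norm_lt_one ((hfn z hz).trans_lt hρ1))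
  have := (Rep.mul bdd0 univ_add hF.conj hinv).const_mul (1 / N ^ 2 : ℝ)
  refine ⟨_, this.congr fun z hz => ?_⟩
  have hFz : F z ≠ 0 := by
    intro h0; have := hlow z hz; rw [h0, norm_zero] at this; linarith
  have hNz : (N : ℂ) ≠ 0 := by exact_mod_cast hN0.ne'
  have hcz : (starRingEnd ℂ) (F z) ≠ 0 := by simpa using hFz
  simp only [hf]
  push_cast
  field_simp
  ring_nf

end FQ

namespace FQ

def D (a : ℝ → ℂ) (z : ℂ) : ℂ := ∑' γ, a γ * E γ z

def Good (a : ℝ → ℂ) (M : ℝ) : Prop :=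
  (Summable fun γ => ‖a γ‖) ∧ ∀ γ, a γ ≠ 0 → |γ| ≤ M

variable {a : ℝ → ℂ} {M : ℝ}

lemma norm_E_le {γ M : ℝ} (h : |γ| ≤ M) {z : ℂ} {Y : ℝ} (hz : |z.im| ≤ Y) :
    ‖E γ z‖ ≤ Real.exp (2 * Real.pi * M * Y) := by
  rw [norm_E]
  apply Real.exp_le_exp.2
  have h1 : |γ * z.im| ≤ M * Y := by
    rw [abs_mul]
    exact mul_le_mul h hz (abs_nonneg _) ((abs_nonneg _).trans h)
  have h2 := neg_abs_le (γ * z.im)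
  have h3 := Real.pi_pos
  nlinarith

lemma Good.term_le (h : Good a M) {z : ℂ} {Y : ℝ} (hz : |z.im| ≤ Y) (γ : ℝ) :
    ‖a γ * E γ z‖ ≤ ‖a γ‖ * Real.exp (2 * Real.pi * M * Y) := by
  rw [norm_mul]
  by_cases h0 : a γ = 0
  · simp [h0]
  · exact mul_le_mul_of_nonneg_left (norm_E_le (h.2 γ h0) hz) (norm_nonneg _)

lemma Good.summ (h : Good a M) (z : ℂ) : Summable fun γ => ‖a γ * E γ z‖ :=
  Summable.of_nonneg_of_le (fun _ => norm_nonneg _) (h.term_le le_rfl) (h.1.mul_right _)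

lemma Good.hasSum (h : Good a M) (z : ℂ) : HasSum (fun γ => a γ * E γ z) (D a z) :=
  (Summable.of_norm (h.summ z)).hasSum

lemma isOpen_strip (Y : ℝ) : IsOpen {z : ℂ | |z.im| < Y} :=
  isOpen_lt (continuous_abs.comp Complex.continuous_im) continuous_const

lemma Good.diff (h : Good a M) : Differentiable ℂ (D a) := by
  intro z
  have := differentiableOn_tsum_of_summable_norm (U := {w : ℂ | |w.im| < |z.im| + 1})
    (F := fun γ z => a γ * E γ z) (h.1.mul_right (Real.exp (2 * Real.pi * M * (|z.im| + 1))))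
    (fun γ => ((differentiable_E γ).const_mul _).differentiableOn) (isOpen_strip _)
    (fun γ w hw => h.term_le (le_of_lt hw) γ)
  exact this.differentiableAt ((isOpen_strip _).mem_nhds (by simp))

lemma deriv_term (c : ℂ) (γ : ℝ) (z : ℂ) :
    deriv (fun z => c * E γ z) z = 2 * Real.pi * I * γ * c * E γ z := by
  rw [((hasDerivAt_E γ z).const_mul c).deriv]; ring

lemma Good.hasSum_deriv (h : Good a M) (z : ℂ) :
    HasSum (fun γ : ℝ => 2 * Real.pi * I * γ * a γ * E γ z) (deriv (D a) z) := by
  have := hasSum_deriv_of_summable_norm (U := {w : ℂ | |w.im| < |z.im| + 1}) (z := z)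
    (F := fun γ z => a γ * E γ z) (h.1.mul_right (Real.exp (2 * Real.pi * M * (|z.im| + 1))))
    (fun γ => ((differentiable_E γ).const_mul _).differentiableOn) (isOpen_strip _)
    (fun γ w hw => h.term_le (le_of_lt hw) γ) (by simp)
  exact hs_congr this (fun γ => (deriv_term _ _ _).symm) rfl

lemma Good.derivGood (h : Good a M) : Good (fun γ => 2 * Real.pi * I * γ * a γ) M := by
  refine ⟨?_, fun γ hγ => h.2 γ (right_ne_zero_of_mul hγ)⟩
  refine Summable.of_nonneg_of_le (fun _ => norm_nonneg _) (fun γ => ?_)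
    (h.1.mul_left (2 * Real.pi * M))
  by_cases h0 : a γ = 0
  · simp [h0]
  · simp only [norm_mul, Complex.norm_real, Complex.norm_I, Real.norm_eq_abs,
      abs_of_pos Real.pi_pos, Complex.norm_ofNat, mul_one]
    gcongr
    exact h.2 γ h0

lemma Good.deriv_eq (h : Good a M) (z : ℂ) :
    deriv (D a) z = D (fun γ => 2 * Real.pi * I * γ * a γ) z :=
  (h.hasSum_deriv z).unique (h.derivGood.hasSum z)

lemma Good.norm_le (h : Good a M) {z : ℂ} {Y : ℝ} (hz : |z.im| ≤ Y) :
    ‖D a z‖ ≤ (∑' γ, ‖a γ‖) * Real.exp (2 * Real.pi * M * Y) := by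
  rw [← tsum_mul_right]
  exact tsum_of_norm_bounded (h.1.mul_right _).hasSum (h.term_le hz)

lemma Good.mul_unit (h : Good a M) {χ : ℝ → ℂ} (hχ : ∀ γ, ‖χ γ‖ = 1) :
    Good (fun γ => a γ * χ γ) M :=
  ⟨by simpa [hχ] using h.1, fun γ hγ => h.2 γ (left_ne_zero_of_mul hγ)⟩

lemma D_translate (z : ℂ) (t : ℂ) : D a (z + t) = D (fun γ => a γ * E γ t) z := by
  unfold D; congr 1; funext γ; rw [E_add_arg]; ring

lemma Good.dist (h : Good a M) {χ χ' : ℝ → ℂ} (hχ : ∀ γ, ‖χ γ‖ = 1) (hχ' : ∀ γ, ‖χ' γ‖ = 1)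
    {z : ℂ} {Y : ℝ} (hz : |z.im| ≤ Y) :
    ‖D (fun γ => a γ * χ γ) z - D (fun γ => a γ * χ' γ) z‖ ≤
      (∑' γ, ‖a γ‖ * ‖χ γ - χ' γ‖) * Real.exp (2 * Real.pi * M * Y) := by
  have h1 := ((h.mul_unit hχ).hasSum z).sub ((h.mul_unit hχ').hasSum z)
  rw [← h1.tsum_eq]
  have hs : Summable fun γ => ‖a γ‖ * ‖χ γ - χ' γ‖ := by
    refine Summable.of_nonneg_of_le (fun _ => by positivity) (fun γ => ?_) (h.1.mul_right 2)
    gcongr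
    refine (norm_sub_le _ _).trans ?_
    rw [hχ, hχ']; norm_num
  refine tsum_of_norm_bounded (hs.hasSum.mul_right _) (fun γ => ?_)
  have : a γ * χ γ * E γ z - a γ * χ' γ * E γ z = (χ γ - χ' γ) * (a γ * E γ z) := by ring
  rw [this, norm_mul]
  calc _ ≤ ‖χ γ - χ' γ‖ * (‖a γ‖ * Real.exp (2 * Real.pi * M * Y)) := by
        gcongr; exact h.term_le hz γ
    _ = _ := by ring

lemma Good.limit (h : Good a M) (t : ℕ → ℝ) (U : Ultrafilter ℕ) : ∃ χ : ℝ → ℂ,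
    (∀ γ, ‖χ γ‖ = 1) ∧
    Tendsto (fun n => ∑' γ, ‖a γ‖ * ‖E γ (t n) - χ γ‖) U (𝓝 0) := by
  have h1 : ∀ γ : ℝ, ∃ c : ℂ, ‖c‖ = 1 ∧ Tendsto (fun n => E γ (t n)) U (𝓝 c) := by
    intro γ
    obtain ⟨c, hc, hlim⟩ := (isCompact_sphere (0 : ℂ) 1).ultrafilter_le_nhds
      (U.map (fun n => E γ (t n))) (by
        rw [le_principal_iff]
        exact Filter.mem_map.2 (Eventually.of_forall fun n => by simp [norm_E_real]))
    exact ⟨c, by simpa using hc, hlim⟩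
  choose χ hχ hlim using h1
  refine ⟨χ, hχ, ?_⟩
  have := tendsto_tsum_of_dominated_convergence (𝓕 := (U : Filter ℕ))
    (f := fun n γ => ‖a γ‖ * ‖E γ (t n) - χ γ‖) (g := fun _ => 0) (h.1.mul_right 2)
    (fun γ => by
      have := ((hlim γ).sub_const (χ γ)).norm.const_mul ‖a γ‖
      simpa using this)
    (Eventually.of_forall fun n γ => by
      rw [Real.norm_eq_abs, abs_of_nonneg (by positivity)]
      gcongr
      refine (norm_sub_le _ _).trans ?_
      rw [hχ, norm_E_real]; norm_num)
  simpa using this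

lemma Good.recur (h : Good a M) {ε : ℝ} (hε : 0 < ε) (N : ℕ) : ∃ T : ℝ, N ≤ T ∧
    ∑' γ, ‖a γ‖ * ‖E γ T - 1‖ < ε := by
  obtain ⟨χ, hχ, hlim⟩ := h.limit (fun n => (n : ℝ)) (hyperfilter ℕ)
  have hev := (tendsto_order.1 hlim).2 (ε / 2) (by linarith)
  obtain ⟨n, hn⟩ := hev.exists
  have hge : ∀ᶠ m in (hyperfilter ℕ : Filter ℕ), n + N ≤ m :=
    (Nat.hyperfilter_le_atTop) (eventually_ge_atTop (n + N))
  obtain ⟨m, hm, hmn⟩ := (hev.and hge).exists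
  refine ⟨(m : ℝ) - n, ?_, ?_⟩
  · have : ((n + N : ℕ) : ℝ) ≤ m := by exact_mod_cast hmn
    push_cast at this; linarith
  · have hs : ∀ k : ℕ, Summable fun γ => ‖a γ‖ * ‖E γ (k : ℝ) - χ γ‖ := by
      intro k
      refine Summable.of_nonneg_of_le (fun _ => by positivity) (fun γ => ?_) (h.1.mul_right 2)
      gcongr
      refine (norm_sub_le _ _).trans ?_
      rw [hχ, norm_E_real]; norm_num
    have hle : ∀ γ, ‖a γ‖ * ‖E γ ((m : ℝ) - n : ℝ) - 1‖ ≤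
        ‖a γ‖ * ‖E γ (m : ℝ) - χ γ‖ + ‖a γ‖ * ‖E γ (n : ℝ) - χ γ‖ := by
      intro γ
      rw [← mul_add]
      gcongr
      have e1 : E γ ((m : ℝ) : ℂ) = E γ ((m : ℝ) - n : ℝ) * E γ ((n : ℝ) : ℂ) := by
        rw [← E_add_arg]; congr 1; push_cast; ring
      have e2 : ‖E γ ((m : ℝ) - n : ℝ) - 1‖ = ‖E γ ((m : ℝ) : ℂ) - E γ ((n : ℝ) : ℂ)‖ := by
        rw [e1, ← sub_one_mul, norm_mul, norm_E_real, mul_one]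
      rw [e2]
      have : E γ ((m : ℝ) : ℂ) - E γ ((n : ℝ) : ℂ) =
        (E γ ((m : ℝ) : ℂ) - χ γ) - (E γ ((n : ℝ) : ℂ) - χ γ) := by ring
      rw [this]
      exact norm_sub_le _ _
    calc _ ≤ ∑' γ, (‖a γ‖ * ‖E γ (m : ℝ) - χ γ‖ + ‖a γ‖ * ‖E γ (n : ℝ) - χ γ‖) :=
          Summable.tsum_le_tsum hle
            (Summable.of_nonneg_of_le (fun _ => by positivity) hle ((hs m).add (hs n)))
            ((hs m).add (hs n))
      _ = _ := (hs m).tsum_add (hs n)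
      _ < ε := by linarith

lemma Good.zero_of (h : Good a M) (h0 : ∀ x : ℝ, D a x = 0) (γ : ℝ) : a γ = 0 := by
  have := coeff_le h.1 (f := fun x : ℝ => D a x) (fun x => h.hasSum x) (K := 0)
    (fun x => by simp [h0 x]) γ
  simpa using this

lemma strip_low (h : Good a M) (hne : ∃ γ, a γ ≠ 0) (hz : ∀ z : ℂ, 0 < z.im → D a z ≠ 0)
    {y₁ y₂ : ℝ} (hy : 0 < y₁) :
    ∃ δ > 0, ∀ z : ℂ, y₁ ≤ z.im → z.im ≤ y₂ → δ ≤ ‖D a z‖ := by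
  by_contra hcon
  push Not at hcon
  have : ∀ n : ℕ, ∃ z : ℂ, y₁ ≤ z.im ∧ z.im ≤ y₂ ∧ ‖D a z‖ < 1 / ((n : ℝ) + 1) :=
    fun n => hcon _ (by positivity)
  choose z hz1 hz2 hz3 using this
  set U := hyperfilter ℕ with hU
  obtain ⟨χ, hχ, hlim⟩ := h.limit (fun n => (z n).re) U
  obtain ⟨y, hyI, hylim⟩ := (isCompact_Icc (a := y₁) (b := y₂)).ultrafilter_le_nhds
    (U.map (fun n => (z n).im)) (by
      rw [le_principal_iff]
      exact Filter.mem_map.2 (Eventually.of_forall fun n => ⟨hz1 n, hz2 n⟩))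
  have hylim : Tendsto (fun n => (z n).im) U (𝓝 y) := hylim
  have hg := h.mul_unit hχ
  set g := D (fun γ => a γ * χ γ) with hgdef
  have han : AnalyticOnNhd ℂ g Set.univ := fun w _ => hg.diff.analyticAt w
  have hnz : ∀ᶠ w in 𝓝[≠] (y * I : ℂ), g w ≠ 0 := by
    rcases (han (y * I) trivial).eventually_eq_zero_or_eventually_ne_zero with h0 | h0
    · exfalso
      have := han.eqOn_zero_of_preconnected_of_eventuallyEq_zero isPreconnected_univ
        (Set.mem_univ _) h0
      obtain ⟨γ, hγ⟩ := hne
      have h2 := hg.zero_of (fun x => this (Set.mem_univ _)) γ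
      rcases mul_eq_zero.1 h2 with h3 | h3
      · exact hγ h3
      · have := hχ γ; rw [h3] at this; simp at this
    · exact h0
  rw [eventually_nhdsWithin_iff, Metric.eventually_nhds_iff_ball] at hnz
  obtain ⟨ε, hε, hball⟩ := hnz
  set r := min ε y₁ / 2 with hr
  have hmin : 0 < min ε y₁ := lt_min hε hy
  have hr0 : 0 < r := by positivity
  have hrε : r < ε := by have := min_le_left ε y₁; rw [hr]; linarith
  have hry : r < y₁ := by have := min_le_right ε y₁; rw [hr]; linarith
  have hsph : ∀ w ∈ sphere (y * I : ℂ) r, g w ≠ 0 := by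
    intro w hw
    apply hball w
    · rw [mem_ball, mem_sphere.1 hw]; exact hrε
    · intro hw'
      rw [Set.mem_singleton_iff.1 hw', mem_sphere, dist_self] at hw
      exact hr0.ne hw
  obtain ⟨w₀, hw₀, hmin₀⟩ := (isCompact_sphere (y * I : ℂ) r).exists_isMinOn
    (NormedSpace.sphere_nonempty.2 hr0.le) (hg.diff.continuous.norm.continuousOn)
  set m := ‖g w₀‖ with hm
  have hm0 : 0 < m := norm_pos_iff.2 (hsph w₀ hw₀)
  have hyy : y₁ ≤ y := hyI.1
  set C := Real.exp (2 * Real.pi * M * (y + r)) with hC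
  have hC0 : 0 < C := Real.exp_pos _
  have e1 := (tendsto_order.1 hlim).2 (m / 2 / C) (by positivity)
  have e2 : ∀ᶠ n in (U : Filter ℕ), |(z n).im - y| < r := by
    have := (tendsto_order.1 ((hylim.sub_const y).abs)).2 r (by simpa using hr0)
    exact this
  have e3 : ∀ᶠ n : ℕ in (U : Filter ℕ), 1 / ((n : ℝ) + 1) < m / 2 :=
    (tendsto_order.1 (tendsto_one_div_add_atTop_nhds_zero_nat (𝕜 := ℝ))).2 (m / 2)
      (by positivity) |> fun h => Nat.hyperfilter_le_atTop h
  obtain ⟨n, hn1, hn2, hn3⟩ := (e1.and (e2.and e3)).exists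
  have him : ∀ w ∈ closedBall (y * I : ℂ) r, |w.im - y| ≤ r := by
    intro w hw
    rw [mem_closedBall, dist_eq_norm] at hw
    have := (Complex.abs_im_le_norm (w - y * I)).trans hw
    simpa using this
  have hpos : ∀ w ∈ closedBall (y * I : ℂ) r, 0 < (w + ((z n).re : ℂ)).im := by
    intro w hw
    have := (abs_le.1 (him w hw)).1
    simp; linarith
  have hsphlow : ∀ w ∈ sphere (y * I : ℂ) r, m / 2 ≤ ‖D a (w + ((z n).re : ℂ))‖ := by
    intro w hw
    have h1 : m ≤ ‖g w‖ := hmin₀ hw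
    have h2 := h.dist (χ := fun γ => E γ (z n).re) (χ' := χ) (fun γ => norm_E_real _ _) hχ
      (z := w) (Y := y + r) (by
        have := abs_le.1 (him w (sphere_subset_closedBall hw))
        rw [abs_le]; constructor <;> linarith)
    rw [← D_translate, ← hgdef] at h2
    have h3 : (∑' γ, ‖a γ‖ * ‖E γ (z n).re - χ γ‖) * C < m / 2 := by
      rwa [lt_div_iff₀ hC0] at hn1
    have h4 : ‖g w‖ ≤ ‖D a (w + ((z n).re : ℂ))‖ + ‖D a (w + ((z n).re : ℂ)) - g w‖ := by
      have := norm_sub_le (D a (w + ((z n).re : ℂ))) (D a (w + ((z n).re : ℂ)) - g w)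
      simpa using this
    linarith
  have hmax := Complex.norm_le_of_forall_mem_frontier_norm_le (U := ball (y * I : ℂ) r)
    (f := fun w => (D a (w + ((z n).re : ℂ)))⁻¹) (C := (m / 2)⁻¹) isBounded_ball (by
      apply DifferentiableOn.diffContOnCl
      rw [closure_ball _ hr0.ne']
      intro w hw
      apply DifferentiableAt.differentiableWithinAt
      apply DifferentiableAt.inv
      · exact (h.diff.comp (differentiable_id.add_const _)).differentiableAt
      · exact hz _ (hpos w hw)) (by
      intro w hw
      rw [frontier_ball _ hr0.ne'] at hw
      rw [norm_inv]
      exact inv_anti₀ (by positivity) (hsphlow w hw)) (z := (z n).im * I) (by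
      apply subset_closure
      rw [mem_ball, dist_eq_norm, ← sub_mul, norm_mul, Complex.norm_I, mul_one,
        ← Complex.ofReal_sub, Complex.norm_real]
      exact hn2)
  have e4 : (((z n).im : ℂ) * I + ((z n).re : ℂ)) = z n := by
    rw [add_comm]; exact Complex.re_add_im _
  simp only [e4] at hmax
  rw [norm_inv] at hmax
  have hp : 0 < ‖D a (z n)‖ := norm_pos_iff.2 (hz _ (hy.trans_le (hz1 n)))
  have := (inv_le_inv₀ hp (by positivity)).1 hmax
  linarith [hz3 n]

lemma coeff_shift {G : ℂ → ℂ} {y₁ y₂ K : ℝ} (hy : y₁ ≤ y₂)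
    (hG : ∀ z : ℂ, y₁ ≤ z.im → z.im ≤ y₂ → DifferentiableAt ℂ G z)
    (hK : ∀ z : ℂ, y₁ ≤ z.im → z.im ≤ y₂ → ‖G z‖ ≤ K) {u v : ℝ → ℂ}
    (hu : Summable fun γ => ‖u γ‖) (hv : Summable fun γ => ‖v γ‖)
    (hu' : ∀ x : ℝ, HasSum (fun γ => u γ * E γ x) (G (x + y₁ * I)))
    (hv' : ∀ x : ℝ, HasSum (fun γ => v γ * E γ x) (G (x + y₂ * I))) (γ : ℝ) :
    u γ * E (-γ) (y₁ * I) = v γ * E (-γ) (y₂ * I) := by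
  have hK0 : 0 ≤ K := (norm_nonneg _).trans (hK (y₁ * I) (by simp) (by simpa using hy))
  have l1 := ((mean_coeff hu hu' γ).mul_const (E (-γ) (y₁ * I))).sub
    ((mean_coeff hv hv' γ).mul_const (E (-γ) (y₂ * I)))
  obtain ⟨B, hB⟩ : ∃ B : ℝ, ∀ z : ℂ, y₁ ≤ z.im → z.im ≤ y₂ → ‖E (-γ) z‖ ≤ B :=
    ⟨_, fun z h1 h2 => norm_E_le (γ := -γ) le_rfl (Y := max |y₁| |y₂|)
      (by
        rw [abs_le]
        have := neg_abs_le y₁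
        have := le_abs_self y₂
        have := le_max_left |y₁| |y₂|
        have := le_max_right |y₁| |y₂|
        constructor <;> linarith)⟩
  have hB0 : 0 ≤ B := (norm_nonneg _).trans (hB (y₁ * I) (by simp) (by simpa using hy))
  have key : ∀ T : ℝ, 0 < T → ‖(1 / T : ℂ) * (∫ x in (0:ℝ)..T, G (x + y₁ * I) * E (-γ) x) *
      E (-γ) (y₁ * I) - (1 / T : ℂ) * (∫ x in (0:ℝ)..T, G (x + y₂ * I) * E (-γ) x) *
      E (-γ) (y₂ * I)‖ ≤ (1 / T) * (2 * (K * B * (y₂ - y₁))) := by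
    intro T hT
    have hrect := Complex.integral_boundary_rect_eq_zero_of_differentiableOn
      (fun z => G z * E (-γ) z) (y₁ * I) (T + y₂ * I) (by
        intro z hz
        simp only [Complex.mem_reProdIm] at hz
        have h2 := hz.2
        simp [Set.uIcc_of_le hy] at h2
        exact ((hG z h2.1 h2.2).mul ((differentiable_E _) z)).differentiableWithinAt)
    simp at hrect
    have hv1 : ∀ s : ℝ, ‖∫ y in y₁..y₂, G (s + y * I) * E (-γ) (s + y * I)‖ ≤
        K * B * |y₂ - y₁| := by
      intro s
      apply intervalIntegral.norm_integral_le_of_norm_le_const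
      intro y hy'
      rw [Set.uIoc_of_le hy] at hy'
      rw [norm_mul]
      exact mul_le_mul (hK _ (by simpa using hy'.1.le) (by simpa using hy'.2))
        (hB _ (by simpa using hy'.1.le) (by simpa using hy'.2)) (norm_nonneg _) hK0
    have hbot : ∀ y : ℝ, (1 / T : ℂ) * (∫ x in (0:ℝ)..T, G (x + y * I) * E (-γ) x) *
        E (-γ) (y * I) = (1 / T : ℂ) * ∫ x in (0:ℝ)..T, G (x + y * I) * E (-γ) (x + y * I) := by
      intro y
      rw [mul_assoc, ← intervalIntegral.integral_mul_const]
      congr 2; funext x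
      rw [E_add_arg]; ring
    rw [hbot, hbot, ← mul_sub, norm_mul]
    have h1 : ‖(1 / T : ℂ)‖ = 1 / T := by simp [abs_of_pos hT]
    rw [h1]
    gcongr
    have hv2 := hv1 T
    have hv3 := hv1 0
    simp only [Complex.ofReal_zero, zero_add] at hv3
    rw [abs_of_nonneg (by linarith)] at hv2 hv3
    set A1 := ∫ x in (0:ℝ)..T, G (x + y₁ * I) * E (-γ) (x + y₁ * I)
    set A2 := ∫ x in (0:ℝ)..T, G (x + y₂ * I) * E (-γ) (x + y₂ * I)
    set A3 := ∫ y in y₁..y₂, G (T + y * I) * E (-γ) (T + y * I)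
    set A4 := ∫ y in y₁..y₂, G (y * I) * E (-γ) (y * I)
    have : A1 - A2 = I * A4 - I * A3 := by linear_combination hrect
    rw [this]
    refine (norm_sub_le _ _).trans ?_
    simp only [norm_mul, Complex.norm_I, one_mul]
    linarith
  have l2 : Tendsto (fun T : ℝ => (1 / T) * (2 * (K * B * (y₂ - y₁)))) atTop (𝓝 0) := by
    simpa using (tendsto_inv_atTop_zero (𝕜 := ℝ)).mul_const (2 * (K * B * (y₂ - y₁)))
  have l3 := squeeze_zero_norm' (by
    filter_upwards [eventually_gt_atTop 0] with T hT using key T hT) l2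
  exact sub_eq_zero.1 (tendsto_nhds_unique l1 l3)

end FQ

namespace FQ

lemma exists_log {g : ℂ → ℂ} {z₀ : ℂ} {R : ℝ} (hR : 0 < R) (hg : DifferentiableOn ℂ g (ball z₀ R))
    (h0 : ∀ z ∈ ball z₀ R, g z ≠ 0) :
    ∃ f : ℂ → ℂ, DifferentiableOn ℂ f (ball z₀ R) ∧ ∀ z ∈ ball z₀ R, g z = Complex.exp (f z) := by
  have hd : DifferentiableOn ℂ (fun z => deriv g z / g z) (ball z₀ R) :=
    (hg.deriv isOpen_ball).div hg h0
  obtain ⟨f, hf0, hf⟩ := hd.isExactOn_ball.with_val_at z₀ (Complex.log (g z₀))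
  refine ⟨f, fun z hz => (hf z hz).differentiableAt.differentiableWithinAt, ?_⟩
  have hz0 : z₀ ∈ ball z₀ R := mem_ball_self hR
  have key : ∀ z ∈ ball z₀ R, HasDerivAt (fun z => g z * Complex.exp (-f z)) 0 z := by
    intro z hz
    have h1 := (hg.differentiableAt (isOpen_ball.mem_nhds hz)).hasDerivAt
    have h2 := (hf z hz).neg.cexp
    have h3 := h1.mul h2
    have h6 := h0 z hz
    have e : deriv g z * Complex.exp (-f z) + g z * (Complex.exp (-f z) * -(deriv g z / g z))
        = 0 := by
      field_simp
      ring
    exact e ▸ h3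
  intro z hz
  have h5 := isOpen_ball.is_const_of_deriv_eq_zero (convex_ball z₀ R).isPreconnected
    (f := fun z => g z * Complex.exp (-f z))
    (fun z hz => (key z hz).differentiableAt.differentiableWithinAt)
    (fun z hz => (key z hz).deriv) hz hz0
  simp only [hf0, Complex.exp_neg, Complex.exp_log (h0 z₀ hz0), mul_inv_cancel₀ (h0 z₀ hz0)] at h5
  field_simp at h5
  exact h5

lemma harnack {g : ℂ → ℂ} {z₀ : ℂ} {R : ℝ} (hR : 0 < R) (hg : DifferentiableOn ℂ g (ball z₀ R))
    (h0 : ∀ z ∈ ball z₀ R, g z ≠ 0) (h1 : ∀ z ∈ ball z₀ R, ‖g z‖ < 1) {w : ℂ}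
    (hw : w ∈ ball z₀ R) :
    (R - dist w z₀) * (-Real.log ‖g z₀‖) ≤ (R + dist w z₀) * (-Real.log ‖g w‖) := by
  obtain ⟨f, hf, hfe⟩ := exists_log hR hg h0
  have hz0 : z₀ ∈ ball z₀ R := mem_ball_self hR
  have hlog : ∀ z ∈ ball z₀ R, Real.log ‖g z‖ = (f z).re := by
    intro z hz
    rw [hfe z hz, Complex.norm_exp, Real.log_exp]
  have hneg : ∀ z ∈ ball z₀ R, (f z).re < 0 := by
    intro z hz
    rw [← hlog z hz]
    exact Real.log_neg (norm_pos_iff.2 (h0 z hz)) (h1 z hz)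
  set f0 := f z₀ with hf0
  have hden : ∀ z ∈ ball z₀ R, f z + (starRingEnd ℂ) f0 ≠ 0 := by
    intro z hz h
    have := congrArg Complex.re h
    simp at this
    linarith [hneg z hz, hneg z₀ hz0]
  have hnum : ∀ z, ‖f z - f0‖ ^ 2 = ((f z).re - f0.re) ^ 2 + ((f z).im - f0.im) ^ 2 := by
    intro z
    rw [← Complex.normSq_eq_norm_sq, Complex.normSq_apply]; simp; ring
  have hde : ∀ z, ‖f z + (starRingEnd ℂ) f0‖ ^ 2 =
      ((f z).re + f0.re) ^ 2 + ((f z).im - f0.im) ^ 2 := by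
    intro z
    rw [← Complex.normSq_eq_norm_sq, Complex.normSq_apply]; simp; ring
  have hS := Complex.dist_le_div_mul_dist_of_mapsTo_ball
    (f := fun z => (f z - f0) / (f z + (starRingEnd ℂ) f0)) (c := z₀) (R₁ := R) (R₂ := 1) (z := w)
    ((hf.sub_const _).div (hf.add_const _) hden) (by
      intro z hz
      have a1 := hneg z hz
      have a2 := hneg z₀ hz0
      simp only [← hf0, sub_self, zero_div, mem_closedBall, dist_zero_right, norm_div]
      rw [div_le_one (norm_pos_iff.2 (hden z hz))]
      refine (le_abs_self _).trans (abs_le_of_sq_le_sq ?_ (norm_nonneg _))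
      rw [hnum, hde]
      nlinarith) hw
  simp only [← hf0, sub_self, zero_div, dist_zero_right, norm_div] at hS
  rw [div_le_iff₀ (norm_pos_iff.2 (hden w hw))] at hS
  set t := 1 / R * dist w z₀ with ht
  have ht0 : 0 ≤ t := by positivity
  have hdR : dist w z₀ = t * R := by rw [ht]; field_simp
  have ht1 : t < 1 := by
    have := mem_ball.1 hw
    rw [hdR] at this
    by_contra hh
    push Not at hh
    nlinarith
  have hS2 : ‖f w - f0‖ ^ 2 ≤ t ^ 2 * ‖f w + (starRingEnd ℂ) f0‖ ^ 2 := by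
    rw [← mul_pow]; gcongr
  rw [hnum, hde] at hS2
  rw [hlog w hw, hlog z₀ hz0, ← hf0, hdR]
  have a1 := hneg w hw
  have a2 := hneg z₀ hz0
  rw [← hf0] at a2
  have h7 : (f w).re - f0.re ≤ t * (-(f w).re - f0.re) := by
    refine (le_abs_self _).trans (abs_le_of_sq_le_sq ?_ (by nlinarith))
    have h8 : t ^ 2 ≤ 1 := by nlinarith
    have h9 := mul_le_mul_of_nonneg_right h8 (sq_nonneg ((f w).im - f0.im))
    nlinarith
  nlinarith

lemma harnack_up {g : ℂ → ℂ} (hg : Differentiable ℂ g)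
    (h0 : ∀ z : ℂ, 0 < z.im → g z ≠ 0) (h1 : ∀ z : ℂ, 0 < z.im → ‖g z‖ < 1) {x y y' : ℝ}
    (hy : 0 < y) (hyy : y ≤ y') :
    y * (-Real.log ‖g (x + y' * I)‖) ≤ 2 * y' * (-Real.log ‖g (x + y * I)‖) := by
  have hy' : 0 < y' := hy.trans_le hyy
  have him : ∀ z ∈ ball (x + y' * I : ℂ) y', 0 < z.im := by
    intro z hz
    rw [mem_ball, dist_eq_norm] at hz
    have := (Complex.abs_im_le_norm _).trans_lt hz
    simp at this
    linarith [(abs_lt.1 this).1]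
  have hd : dist (x + y * I : ℂ) (x + y' * I) = y' - y := by
    rw [dist_eq_norm]
    have : (x + y * I : ℂ) - (x + y' * I) = ((y - y' : ℝ) : ℂ) * I := by push_cast; ring
    rw [this, norm_mul, Complex.norm_I, mul_one, Complex.norm_real, Real.norm_eq_abs,
      abs_of_nonpos (by linarith)]
    ring
  have := harnack (g := g) (z₀ := x + y' * I) hy' hg.differentiableOn (fun z hz => h0 z (him z hz))
    (fun z hz => h1 z (him z hz)) (w := x + y * I) (by rw [mem_ball, hd]; linarith)
  rw [hd] at this
  have h2 : Real.log ‖g (x + y * I)‖ < 0 :=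
    Real.log_neg (norm_pos_iff.2 (h0 _ (by simpa using hy))) (h1 _ (by simpa using hy))
  nlinarith

variable {a : ℝ → ℂ} {M : ℝ}

lemma Good.norm_up (h : Good a M) (hneg : ∀ γ < 0, a γ = 0) {z : ℂ} (hz : 0 ≤ z.im) :
    ‖D a z‖ ≤ ∑' γ, ‖a γ‖ := by
  refine tsum_of_norm_bounded h.1.hasSum (fun γ => ?_)
  rw [norm_mul]
  by_cases hγ : γ < 0
  · simp [hneg γ hγ]
  · push Not at hγ
    refine mul_le_of_le_one_right (norm_nonneg _) ?_
    rw [norm_E, Real.exp_le_one_iff]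
    have := Real.pi_pos
    have : 0 ≤ 2 * Real.pi * γ * z.im := by positivity
    linarith

lemma Good.line (h : Good a M) (y : ℝ) : (Summable fun γ => ‖a γ * E γ (y * I)‖) ∧
    ∀ x : ℝ, HasSum (fun γ => a γ * E γ (y * I) * E γ x) (D a (x + y * I)) :=
  ⟨h.summ _, fun x => hs_congr (h.hasSum _) (fun γ => by rw [E_add_arg]; ring) rfl⟩

lemma Good.tendsto_up (h : Good a M) (hneg : ∀ γ ≤ 0, a γ = 0) :
    Tendsto (fun y : ℝ => D a (y * I)) atTop (𝓝 0) := by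
  have := tendsto_tsum_of_dominated_convergence (𝓕 := (atTop : Filter ℝ))
    (f := fun (y : ℝ) γ => a γ * E γ (y * I)) (g := fun _ => (0 : ℂ)) h.1
    (fun γ => by
      by_cases hγ : γ ≤ 0
      · simp [hneg γ hγ]
      · push Not at hγ
        have : Tendsto (fun y : ℝ => E γ (y * I)) atTop (𝓝 0) := by
          rw [tendsto_zero_iff_norm_tendsto_zero]
          simp only [norm_E]
          refine Real.tendsto_exp_neg_atTop_nhds_zero.comp ?_
          have hp : 0 < 2 * Real.pi * γ := by have := Real.pi_pos; positivity
          simpa using tendsto_id.const_mul_atTop hp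
        simpa using this.const_mul (a γ))
    (by
      filter_upwards [eventually_ge_atTop 0] with y hy γ
      rw [norm_mul]
      by_cases hγ : γ ≤ 0
      · simp [hneg γ hγ]
      · push Not at hγ
        refine mul_le_of_le_one_right (norm_nonneg _) ?_
        rw [norm_E, Real.exp_le_one_iff]
        have := Real.pi_pos
        have : 0 ≤ 2 * Real.pi * γ * y := by positivity
        simp; linarith)
  simpa [D] using this

lemma extreme_aux (h : Good a M) (hneg : ∀ γ ≤ 0, a γ = 0) (hsum : ∑' γ, ‖a γ‖ < 1)
    (hinf : ∀ ε > 0, ∃ γ < ε, a γ ≠ 0) (hz : ∀ z : ℂ, 0 < z.im → D a z ≠ 0) : False := by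
  obtain ⟨γ₁, -, hγ₁⟩ := hinf 1 one_pos
  obtain ⟨δ, hδ, hlow⟩ := strip_low h ⟨γ₁, hγ₁⟩ hz (y₁ := 1) (y₂ := 1) one_pos
  have hlt : ∀ z : ℂ, 0 < z.im → ‖D a z‖ < 1 := fun z hz' =>
    (h.norm_up (fun γ hγ => hneg γ hγ.le) hz'.le).trans_lt hsum
  have hpos : ∀ z : ℂ, 0 < z.im → 0 < ‖D a z‖ := fun z hz' => norm_pos_iff.2 (hz z hz')
  have hlow1 : ∀ x : ℝ, δ ≤ ‖D a (x + (1 : ℝ) * I)‖ := fun x => hlow _ (by simp) (by simp)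
  have hδ1 : δ < 1 := (hlow1 0).trans_lt (hlt _ (by simp))
  set C := -Real.log δ with hC
  have hC0 : 0 < C := by have := Real.log_neg hδ hδ1; rw [hC]; linarith
  -- general growth bound
  have hgrow : ∀ x y : ℝ, 1 ≤ y → ‖D a (x + y * I)‖⁻¹ ≤ Real.exp (2 * C * y) := by
    intro x y hy
    have h1 := harnack_up h.diff hz hlt (x := x) one_pos hy
    have h2 : -Real.log ‖D a (x + (1 : ℝ) * I)‖ ≤ C := by
      have := Real.log_le_log hδ (hlow1 x); rw [hC]; linarith
    have hp := hpos (x + y * I) (by simp; linarith)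
    rw [← Real.exp_log hp, ← Real.exp_neg]
    apply Real.exp_le_exp.2
    nlinarith
  have main : ∀ ε > 0, ∀ y : ℝ, 1 ≤ y → ‖D a (y * I)‖⁻¹ ≤ δ⁻¹ * Real.exp (18 * ε * (y - 1)) := by
    intro ε hε y hy
    obtain ⟨ω, hωε, hω⟩ := hinf ε hε
    have hω0 : 0 < ω := by
      by_contra hh; exact hω (hneg ω (not_lt.1 hh))
    set Y := max 1 (Real.log (2 / ‖a ω‖) / ε) with hY
    have hY1 : 1 ≤ Y := le_max_left _ _
    have hY2 : Real.log (2 / ‖a ω‖) ≤ ε * Y := by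
      have := le_max_right 1 (Real.log (2 / ‖a ω‖) / ε)
      rw [← hY, div_le_iff₀ hε] at this; linarith
    have haω : 0 < ‖a ω‖ := norm_pos_iff.2 hω
    obtain ⟨x, hx⟩ : ∃ x : ℝ, ‖a ω‖ / 2 * Real.exp (-(2 * Real.pi * ω * Y)) <
        ‖D a (x + Y * I)‖ := by
      by_contra hcon
      push Not at hcon
      have := coeff_le (h.line Y).1 (h.line Y).2 hcon ω
      rw [norm_mul, norm_E] at this
      simp at this
      have := Real.exp_pos (-(2 * Real.pi * ω * Y))
      nlinarith
    have hpi := Real.pi_lt_four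
    have hpi0 := Real.pi_pos
    have hu : -Real.log ‖D a (x + Y * I)‖ ≤ 9 * ε * Y := by
      have h1 := Real.log_le_log (by positivity) hx.le
      rw [Real.log_mul (by positivity) (by positivity), Real.log_exp] at h1
      have h2 : Real.log (2 / ‖a ω‖) = -Real.log (‖a ω‖ / 2) := by
        rw [← Real.log_inv, inv_div]
      have h3 : 2 * Real.pi * ω * Y ≤ 8 * ε * Y := by
        have : Real.pi * ω ≤ 4 * ε := mul_le_mul hpi.le hωε.le hω0.le (by norm_num)
        nlinarith
      linarith
    have hu' : ∀ y' : ℝ, Y ≤ y' → ‖D a (x + y' * I)‖⁻¹ ≤ Real.exp (18 * ε * y') := by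
      intro y' hy'
      have h1 := harnack_up h.diff hz hlt (x := x) (by linarith : 0 < Y) hy'
      have hp := hpos (x + y' * I) (by simp; linarith)
      rw [← Real.exp_log hp, ← Real.exp_neg]
      apply Real.exp_le_exp.2
      have h2 : Y * (-Real.log ‖D a (x + y' * I)‖) ≤ Y * (18 * ε * y') := by nlinarith
      exact le_of_mul_le_mul_left h2 (by linarith)
    have him : ∀ w : ℂ, ((x : ℂ) + (1 + w) * I).im = 1 + w.re := by intro w; simp
    have hxy : ∀ w : ℂ, (x : ℂ) + (1 + w) * I =
        ((x - w.im : ℝ) : ℂ) + ((1 + w.re : ℝ) : ℂ) * I := by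
      intro w
      apply Complex.ext <;> simp
      ring
    have hPL := PhragmenLindelof.right_half_plane_of_bounded_on_real (C := δ⁻¹)
      (f := fun w => Complex.exp (-(18 * ε : ℝ) * w) * (D a (x + (1 + w) * I))⁻¹)
      (z := ((y - 1 : ℝ) : ℂ) + (x : ℂ) * I) (by
        apply DifferentiableOn.diffContOnCl
        intro w hw
        have hw' : 0 ≤ w.re := by
          have := closure_mono (s := {z : ℂ | 0 < z.re}) (t := {z : ℂ | 0 ≤ z.re})
            (fun z hz => le_of_lt (show 0 < z.re from hz)) hw
          rwa [(isClosed_le continuous_const Complex.continuous_re).closure_eq] at this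
        apply DifferentiableAt.differentiableWithinAt
        apply DifferentiableAt.mul
        · fun_prop
        · apply DifferentiableAt.inv
          · exact (h.diff.comp (by fun_prop : Differentiable ℂ fun w : ℂ =>
              (x : ℂ) + (1 + w) * I)) w
          · exact hz _ (by rw [him]; linarith)) (by
        refine ⟨1, by norm_num, 2 * C, ?_⟩
        apply Asymptotics.IsBigO.of_bound (Real.exp (2 * C))
        rw [eventually_inf_principal]
        refine Eventually.of_forall fun w hw => ?_
        have hw : 0 < w.re := hw
        rw [norm_mul, norm_inv, Real.rpow_one, Real.norm_eq_abs, abs_of_pos (Real.exp_pos _),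
          Complex.norm_exp, ← Real.exp_add]
        have h1 := hgrow (x - w.im) (1 + w.re) (by linarith)
        rw [← hxy] at h1
        have h2 : Real.exp (-(18 * ε : ℝ) * w).re ≤ 1 := by
          rw [Real.exp_le_one_iff]
          simp; positivity
        refine (mul_le_mul h2 h1 (by positivity) zero_le_one).trans ?_
        rw [one_mul]
        apply Real.exp_le_exp.2
        have := Complex.re_le_norm w
        nlinarith) (by
        refine ⟨Real.exp (18 * ε), ?_⟩
        rw [eventually_map]
        filter_upwards [eventually_ge_atTop Y] with s hs
        have h1 := hu' (1 + s) (by linarith)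
        rw [norm_mul, norm_inv, Complex.norm_exp]
        have e : (x : ℂ) + (1 + (s : ℂ)) * I = x + ((1 + s : ℝ) : ℂ) * I := by push_cast; ring
        rw [e]
        calc _ ≤ Real.exp (-(18 * ε : ℝ) * (s : ℂ)).re * Real.exp (18 * ε * (1 + s)) := by gcongr
          _ = _ := by
            rw [← Real.exp_add]; congr 1; simp; ring) (by
        intro s
        rw [norm_mul, norm_inv, Complex.norm_exp, hxy]
        have h1 := hlow1 (x - s)
        simp at h1 ⊢
        exact inv_anti₀ hδ h1) (by simpa using hy)
    have e : (x : ℂ) + (1 + (((y - 1 : ℝ) : ℂ) + (x : ℂ) * I)) * I = y * I := by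
      push_cast; linear_combination (x : ℂ) * Complex.I_sq
    rw [e, norm_mul, norm_inv, Complex.norm_exp] at hPL
    have e2 : (-(18 * ε : ℝ) * (((y - 1 : ℝ) : ℂ) + (x : ℂ) * I)).re = -(18 * ε * (y - 1)) := by
      simp
    rw [e2, Real.exp_neg, inv_mul_le_iff₀ (Real.exp_pos _)] at hPL
    linarith
  have hge : ∀ y : ℝ, 1 ≤ y → δ ≤ ‖D a (y * I)‖ := by
    intro y hy
    have hp := hpos (y * I) (by simp; linarith)
    have hl : Tendsto (fun ε : ℝ => δ⁻¹ * Real.exp (18 * ε * (y - 1))) (𝓝[>] 0) (𝓝 δ⁻¹) := by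
      have : Continuous fun ε : ℝ => δ⁻¹ * Real.exp (18 * ε * (y - 1)) := by fun_prop
      have := this.tendsto 0
      simp at this
      exact this.mono_left nhdsWithin_le_nhds
    have := ge_of_tendsto hl (by
      filter_upwards [self_mem_nhdsWithin] with ε hε using main ε hε y hy)
    exact (inv_le_inv₀ hp hδ).1 this
  have hl := (h.tendsto_up hneg).norm
  have := ge_of_tendsto hl (by
    filter_upwards [eventually_ge_atTop 1] with y hy using hge y hy)
  simp at this
  linarith

lemma extreme (h : Good a M) (hne : ∃ γ, a γ ≠ 0) (hz : ∀ z : ℂ, 0 < z.im → D a z ≠ 0) :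
    ∃ κ, a κ ≠ 0 ∧ ∀ γ < κ, a γ = 0 := by
  set S := {γ | a γ ≠ 0} with hS
  have hSb : BddBelow S := ⟨-M, fun γ hγ => (abs_le.1 (h.2 γ hγ)).1⟩
  set κ := sInf S with hκ
  have hlt : ∀ γ < κ, a γ = 0 := by
    intro γ hγ
    by_contra hh
    exact absurd (csInf_le hSb (show γ ∈ S from hh)) (not_le.2 hγ)
  refine ⟨κ, fun h0 => ?_, hlt⟩
  set T := ∑' γ, ‖a γ‖ with hT
  have hT0 : 0 ≤ T := tsum_nonneg fun _ => norm_nonneg _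
  set c : ℝ := 1 / (T + 1) with hc
  have hc0 : 0 < c := by positivity
  have hcC : (c : ℂ) ≠ 0 := by exact_mod_cast hc0.ne'
  set b : ℝ → ℂ := fun γ => c * a (γ + κ) with hb
  have hsum : HasSum (fun γ => ‖b γ‖) (c * T) := by
    have h1 : HasSum (fun γ => ‖a (γ + κ)‖) T :=
      (Equiv.addRight κ).hasSum_iff.2 h.1.hasSum
    have h2 := h1.mul_left c
    simpa [hb, abs_of_pos hc0] using h2
  have hbG : Good b (M + |κ|) := by
    refine ⟨hsum.summable, fun γ hγ => ?_⟩
    have h1 := h.2 (γ + κ) (right_ne_zero_of_mul hγ)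
    have h2 := abs_sub (γ + κ) κ
    rw [add_sub_cancel_right] at h2
    linarith
  have hDb : ∀ z, D b z = c * E (-κ) z * D a z := by
    intro z
    have h1 := ((Equiv.addRight κ).hasSum_iff.2 (h.hasSum z)).mul_left (c * E (-κ) z)
    have h2 : HasSum (fun γ => b γ * E γ z) (c * E (-κ) z * D a z) := by
      refine hs_congr h1 (fun γ => ?_) rfl
      simp only [hb, Function.comp, Equiv.coe_addRight, E_add]
      have := E_mul_neg κ z
      linear_combination (-(c : ℂ) * a (γ + κ) * E γ z) * this
    exact h2.tsum_eq
  refine extreme_aux hbG (fun γ hγ => ?_) ?_ (fun ε hε => ?_) (fun z hz' => ?_)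
  · rcases hγ.lt_or_eq with h1 | h1
    · simp [hb, hlt (γ + κ) (by linarith)]
    · simp [hb, h1, h0]
  · rw [hsum.tsum_eq, hc, one_div, inv_mul_lt_iff₀ (by positivity)]
    linarith
  · obtain ⟨γ, hγ, hγε⟩ := exists_lt_of_csInf_lt (show S.Nonempty from hne)
      (show sInf S < κ + ε by linarith)
    exact ⟨γ - κ, by linarith, by simp [hb, hcC]; exact hγ⟩
  · rw [hDb]
    exact mul_ne_zero (mul_ne_zero hcC (E_ne _ _)) (hz z hz')

end FQ

namespace FQ

variable {a : ℝ → ℂ} {M : ℝ}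

def UX : Set ℂ := {z : ℂ | 0 ≤ z.im}

lemma bddU : Bdd (Set.Ioi 0) UX := by
  intro γ hγ z hz
  rw [norm_E, Real.exp_le_one_iff]
  have h1 : 0 < γ := hγ
  have h2 : 0 ≤ z.im := hz
  have := Real.pi_pos
  have : 0 ≤ 2 * Real.pi * γ * z.im := by positivity
  linarith

lemma Rep.powU {F : ℂ → ℂ} {N : ℝ} (h : Rep (Set.Ioi 0) UX F N) (k : ℕ) :
    Rep (Set.Ioi 0) UX (fun z => F z ^ (k + 1)) (N ^ (k + 1)) := by
  induction k with
  | zero => simpa using h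
  | succ k ih =>
    simp_rw [pow_succ _ (k + 1)]
    exact Rep.mul bddU (fun a ha b hb => Set.mem_Ioi.2 (add_pos ha hb)) ih h

lemma log_rep {p : ℝ → ℂ} (hp : Summable fun γ => ‖p γ‖) (hp2 : ∑' γ, ‖p γ‖ ≤ 1 / 2)
    (hp0 : ∀ γ, p γ ≠ 0 → 0 < γ) : ∃ l : ℝ → ℂ, (∀ γ, l γ ≠ 0 → 0 < γ) ∧
      (Summable fun γ => ‖l γ‖) ∧ ∀ w : ℂ, 0 ≤ w.im →
        HasSum (fun γ => l γ * E γ w) (Complex.log (1 + D p w)) := by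
  have hterm : ∀ z ∈ UX, ∀ γ, ‖p γ * E γ z‖ ≤ ‖p γ‖ := by
    intro z hz γ
    by_cases h0 : p γ = 0
    · simp [h0]
    · rw [norm_mul]
      exact mul_le_of_le_one_right (norm_nonneg _) (bddU γ (hp0 γ h0) z hz)
  have hDs : ∀ z ∈ UX, HasSum (fun γ => p γ * E γ z) (D p z) := fun z hz =>
    (Summable.of_norm_bounded hp (hterm z hz)).hasSum
  have hD : Rep (Set.Ioi 0) UX (D p) (1 / 2) := by
    refine ⟨Function.support p, fun γ => p γ, fun γ => γ, fun γ => hp0 _ γ.2,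
      hp.subtype _, ?_, fun z hz => ?_⟩
    · refine le_trans ?_ hp2
      exact hp.tsum_subtype_le (fun γ => ‖p γ‖) _ (fun _ => norm_nonneg _)
    · have h1 := hDs z hz
      exact (hasSum_subtype_iff_of_support_subset (f := fun γ => p γ * E γ z)
        (fun γ hγ => left_ne_zero_of_mul hγ)).2 h1
  have hnorm : ∀ z ∈ UX, ‖D p z‖ ≤ 1 / 2 := fun z hz => hD.norm_le bddU hz
  have hrep : ∀ n : ℕ, Rep (Set.Ioi 0) UX (fun z => (-1) ^ (n + 2) / ((n + 1 : ℕ) : ℂ) *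
      D p z ^ (n + 1)) ((1 / 2) ^ (n + 1)) := by
    intro n
    refine ((hD.powU n).const_mul ((-1) ^ (n + 2) / ((n + 1 : ℕ) : ℂ))).mono ?_
    refine mul_le_of_le_one_left (by positivity) ?_
    rw [norm_div, norm_pow, norm_neg, norm_one, one_pow, Complex.norm_natCast]
    rw [div_le_one (by positivity)]
    push_cast
    have : (0:ℝ) ≤ n := Nat.cast_nonneg n
    linarith
  have hsum : Summable fun n : ℕ => ((1:ℝ) / 2) ^ (n + 1) :=
    (summable_nat_add_iff 1).2 (summable_geometric_of_lt_one (by norm_num) (by norm_num))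
  have hL : Rep (Set.Ioi 0) UX (fun z => Complex.log (1 + D p z))
      (∑' n : ℕ, ((1:ℝ) / 2) ^ (n + 1)) := by
    refine Rep.hasSum bddU hrep hsum.hasSum (fun z hz => ?_)
    have h1 := Complex.hasSum_taylorSeries_log (z := D p z) ((hnorm z hz).trans_lt (by norm_num))
    rw [← hasSum_nat_add_iff' 1] at h1
    refine hs_congr h1 (fun n => ?_) (by simp)
    ring
  obtain ⟨l, h1, h2, -, h4⟩ := hL.canon
  exact ⟨l, h1, h2, h4⟩

lemma Good.exists_H (h : Good a M) (hneg : ∀ γ ≤ 0, a γ = 0) {ε : ℝ} (hε : 0 < ε) :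
    ∃ H : ℝ, 0 < H ∧ ∑' γ, ‖a γ * E γ (H * I)‖ ≤ ε := by
  have := tendsto_tsum_of_dominated_convergence (𝓕 := (atTop : Filter ℝ))
    (f := fun (y : ℝ) γ => ‖a γ * E γ (y * I)‖) (g := fun _ => (0 : ℝ)) h.1
    (fun γ => by
      by_cases hγ : γ ≤ 0
      · simp [hneg γ hγ]
      · push Not at hγ
        have : Tendsto (fun y : ℝ => E γ (y * I)) atTop (𝓝 0) := by
          rw [tendsto_zero_iff_norm_tendsto_zero]
          simp only [norm_E]
          refine Real.tendsto_exp_neg_atTop_nhds_zero.comp ?_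
          have hp : 0 < 2 * Real.pi * γ := by have := Real.pi_pos; positivity
          simpa using tendsto_id.const_mul_atTop hp
        simpa using (this.const_mul (a γ)).norm)
    (by
      filter_upwards [eventually_ge_atTop 0] with y hy γ
      rw [norm_norm, norm_mul]
      by_cases hγ : γ ≤ 0
      · simp [hneg γ hγ]
      · push Not at hγ
        exact mul_le_of_le_one_right (norm_nonneg _) (bddU γ hγ _ (by simpa [UX] using hy)))
  simp only [tsum_zero] at this
  obtain ⟨H, h1, h2⟩ := (((tendsto_order.1 this).2 ε hε).and (eventually_gt_atTop 0)).exists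
  exact ⟨H, h2, h1.le⟩

/-- Log representation high up. -/
lemma high_log (h : Good a M) {κ : ℝ} (hκ : a κ ≠ 0) (hlt : ∀ γ < κ, a γ = 0) :
    ∃ H : ℝ, 0 < H ∧ ∃ l : ℝ → ℂ, (∀ γ, l γ ≠ 0 → 0 < γ) ∧ (Summable fun γ => ‖l γ‖) ∧
      ∀ w : ℂ, 0 ≤ w.im → D a (w + H * I) = a κ * E κ (w + H * I) * Complex.exp (D l w) := by
  classical
  set p : ℝ → ℂ := fun γ => if γ = 0 then 0 else a (γ + κ) / a κ with hp
  have hshift : Summable fun γ => ‖a (γ + κ)‖ := (Equiv.addRight κ).summable_iff.2 h.1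
  have hpG : Good p (M + |κ|) := by
    refine ⟨?_, fun γ hγ => ?_⟩
    · refine Summable.of_nonneg_of_le (fun _ => norm_nonneg _) (fun γ => ?_)
        (hshift.div_const ‖a κ‖)
      simp only [hp]
      split_ifs
      · simp; positivity
      · simp
    · have h0 : a (γ + κ) ≠ 0 := by
        intro h1; apply hγ; simp [hp, h1]
      have h1 := h.2 (γ + κ) h0
      have h2 := abs_sub (γ + κ) κ
      rw [add_sub_cancel_right] at h2
      linarith
  have hpneg : ∀ γ ≤ 0, p γ = 0 := by
    intro γ hγ
    rcases hγ.lt_or_eq with h1 | h1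
    · simp [hp, hlt (γ + κ) (by linarith)]
    · simp [hp, h1]
  obtain ⟨H, hH, hsum⟩ := hpG.exists_H hpneg (ε := 1 / 2) (by norm_num)
  have hDa : ∀ z, D a z = a κ * E κ z * (1 + D p z) := by
    intro z
    have h1 := (Equiv.addRight κ).hasSum_iff.2 (h.hasSum z)
    have h2 := (hasSum_fin (f := fun γ => if γ = 0 then (1:ℂ) else 0) {0}
      (fun γ hγ => by simpa using hγ)).add (hpG.hasSum z)
    have h3 := h2.mul_left (a κ * E κ z)
    simp only [Finset.sum_singleton, if_true] at h3
    refine (h1.unique (hs_congr h3 (fun γ => ?_) rfl))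
    simp only [hp, Function.comp, Equiv.coe_addRight, E_add]
    split_ifs with h0
    · simp [h0, E_zero]
    · field_simp
      ring
  obtain ⟨l, l1, l2, l3⟩ := log_rep (p := fun γ => p γ * E γ (H * I)) (hpG.summ _) hsum
    (fun γ hγ => by
      by_contra hh
      exact hγ (by simp [hpneg γ (not_lt.1 hh)]))
  refine ⟨H, hH, l, l1, l2, fun w hw => ?_⟩
  have e1 : D l w = Complex.log (1 + D (fun γ => p γ * E γ (H * I)) w) := (l3 w hw).tsum_eq
  rw [hDa, D_translate, e1, Complex.exp_log]
  have : ‖D (fun γ => p γ * E γ (H * I)) w‖ ≤ 1 / 2 := by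
    refine le_trans (Good.norm_up (M := M + |κ|) ⟨hpG.summ _, ?_⟩ ?_ hw) hsum
    · exact fun γ hγ => hpG.2 γ (left_ne_zero_of_mul hγ)
    · intro γ hγ; simp [hpneg γ hγ.le]
  intro h0
  have h5 : D (fun γ => p γ * E γ (H * I)) w = -1 := by linear_combination h0
  rw [h5] at this
  norm_num at this

lemma mul_exp_neg_le (x : ℝ) : x * Real.exp (-x) ≤ 1 := by
  have h1 := Real.add_one_le_exp x
  rw [Real.exp_neg, ← div_eq_mul_inv, div_le_one (Real.exp_pos _)]
  linarith

lemma line_rep (h : Good a M) (hne : ∃ γ, a γ ≠ 0) (hz : ∀ z : ℂ, 0 < z.im → D a z ≠ 0)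
    {y : ℝ} (hy : 0 < y) : ∃ u : ℝ → ℂ, (Summable fun γ => ‖u γ‖) ∧
      ∀ x : ℝ, HasSum (fun γ => u γ * E γ x) (deriv (D a) (x + y * I) / D a (x + y * I)) := by
  have r1 : Rep Set.univ X0 (fun z => D a (z + y * I)) _ := rep_of_coeff (h.line y).1 (by
    rintro _ ⟨x, rfl⟩; exact (h.line y).2 x)
  have r2 : Rep Set.univ X0 (fun z => D (fun γ => 2 * Real.pi * I * γ * a γ) (z + y * I)) _ :=
    rep_of_coeff (h.derivGood.line y).1 (by
      rintro _ ⟨x, rfl⟩; exact (h.derivGood.line y).2 x)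
  obtain ⟨δ, hδ, hlow⟩ := strip_low h hne hz (y₁ := y) (y₂ := y) hy
  obtain ⟨N, r3⟩ := wiener r1 hδ (by
    rintro _ ⟨x, rfl⟩; exact hlow _ (by simp) (by simp))
  obtain ⟨c, -, c2, -, c4⟩ := (Rep.mul bdd0 univ_add r2 r3).canon
  refine ⟨c, c2, fun x => ?_⟩
  have := c4 x ⟨x, rfl⟩
  rw [h.deriv_eq, div_eq_mul_one_div]
  exact this

lemma strip_bound (h : Good a M) (hne : ∃ γ, a γ ≠ 0) (hz : ∀ z : ℂ, 0 < z.im → D a z ≠ 0)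
    {y₁ y₂ : ℝ} (hy : 0 < y₁) : ∃ K, ∀ z : ℂ, y₁ ≤ z.im → z.im ≤ y₂ →
      ‖deriv (D a) z / D a z‖ ≤ K := by
  obtain ⟨δ, hδ, hlow⟩ := strip_low h hne hz (y₁ := y₁) (y₂ := y₂) hy
  refine ⟨((∑' γ : ℝ, ‖2 * Real.pi * I * γ * a γ‖) * Real.exp (2 * Real.pi * M * y₂)) / δ,
    fun z h1 h2 => ?_⟩
  rw [norm_div, h.deriv_eq]
  refine div_le_div₀ (mul_nonneg (tsum_nonneg fun _ => norm_nonneg _) (Real.exp_pos _).le) ?_ hδ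
    (hlow z h1 h2)
  exact h.derivGood.norm_le (by rw [abs_of_nonneg] <;> linarith)

lemma upper (h : Good a M) (hne : ∃ γ, a γ ≠ 0) (hz : ∀ z : ℂ, 0 < z.im → D a z ≠ 0) :
    ∃ c : ℝ → ℂ, (∀ y : ℝ, 0 < y → Summable fun γ => ‖c γ‖ * Real.exp (-(2 * Real.pi * γ * y))) ∧
      (∀ z : ℂ, 0 < z.im → HasSum (fun γ => c γ * E γ z) (deriv (D a) z / D a z)) ∧
      (∀ γ < 0, c γ = 0) ∧ Summable fun γ : Set.Ioo (0:ℝ) 1 => ‖c γ‖ / (γ : ℝ) := by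
  classical
  obtain ⟨κ, hκ, hlt⟩ := extreme h hne hz
  obtain ⟨H, hH, l, l1, l2, l3⟩ := high_log h hκ hlt
  have hpi := Real.pi_pos
  have hUo : IsOpen {w : ℂ | 0 < w.im} := isOpen_lt continuous_const Complex.continuous_im
  have hlterm : ∀ γ (w : ℂ), w ∈ {w : ℂ | 0 < w.im} → ‖l γ * E γ w‖ ≤ ‖l γ‖ := by
    intro γ w hw
    by_cases h0 : l γ = 0
    · simp [h0]
    · rw [norm_mul]
      exact mul_le_of_le_one_right (norm_nonneg _) (bddU γ (l1 γ h0) w (le_of_lt (show 0 < w.im from hw)))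
  have hlder : ∀ w : ℂ, 0 < w.im →
      HasSum (fun γ : ℝ => 2 * Real.pi * I * γ * l γ * E γ w) (deriv (D l) w) := by
    intro w hw
    have := hasSum_deriv_of_summable_norm (U := {w : ℂ | 0 < w.im}) (z := w)
      (F := fun γ z => l γ * E γ z) l2
      (fun γ => ((differentiable_E γ).const_mul _).differentiableOn) hUo hlterm hw
    exact hs_congr this (fun γ => (deriv_term _ _ _).symm) rfl
  have hldiff : ∀ w : ℂ, 0 < w.im → DifferentiableAt ℂ (D l) w := by
    intro w hw
    have := differentiableOn_tsum_of_summable_norm (U := {w : ℂ | 0 < w.im})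
      (F := fun γ z => l γ * E γ z) l2
      (fun γ => ((differentiable_E γ).const_mul _).differentiableOn) hUo hlterm
    exact this.differentiableAt (hUo.mem_nhds hw)
  have hF : ∀ w : ℂ, 0 < w.im → deriv (D a) (w + H * I) / D a (w + H * I) =
      2 * Real.pi * I * κ + deriv (D l) w := by
    intro w hw
    have e1 : (fun w => D a (w + H * I)) =ᶠ[𝓝 w]
        fun w => a κ * E κ (w + H * I) * Complex.exp (D l w) := by
      filter_upwards [hUo.mem_nhds hw] with w' hw'
      exact l3 w' (le_of_lt (show 0 < w'.im from hw'))
    have d1 : HasDerivAt (fun w => D a (w + H * I)) (deriv (D a) (w + H * I)) w :=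
      ((h.diff _).hasDerivAt).comp_add_const w (H * I)
    have d2 : HasDerivAt (fun w => a κ * E κ (w + H * I) * Complex.exp (D l w))
        (a κ * (2 * Real.pi * I * κ * E κ (w + H * I)) * Complex.exp (D l w) +
          a κ * E κ (w + H * I) * (Complex.exp (D l w) * deriv (D l) w)) w :=
      (((hasDerivAt_E κ (w + H * I)).comp_add_const w (H * I)).const_mul (a κ)).mul
        (hldiff w hw).hasDerivAt.cexp
    have e2 := (d1.congr_of_eventuallyEq e1.symm).unique d2
    rw [l3 w hw.le, e2]
    have := E_ne κ (w + H * I)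
    have := Complex.exp_ne_zero (D l w)
    generalize E κ (w + H * I) = e at *
    field_simp
  set c0 : ℝ → ℂ := fun γ => 2 * Real.pi * I * γ * l γ + (if γ = 0 then 2 * Real.pi * I * κ else 0)
    with hc0
  have hc0sum : ∀ w : ℂ, 0 < w.im → HasSum (fun γ => c0 γ * E γ w)
      (deriv (D a) (w + H * I) / D a (w + H * I)) := by
    intro w hw
    have h2 := (hlder w hw).add (hasSum_fin
      (f := fun γ => if γ = 0 then (2 * Real.pi * I * κ : ℂ) else 0) {0}
      (fun γ hγ => by
        have : γ ≠ 0 := by simpa using hγ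
        simp [this]))
    simp only [Finset.sum_singleton, if_true] at h2
    refine hs_congr h2 (fun γ => ?_) (by rw [hF w hw]; ring)
    simp only [hc0]
    split_ifs with h0
    · simp [h0, E_zero]
    · ring
  have hc0le : ∀ γ, ‖c0 γ * E γ (1 * I)‖ ≤ ‖l γ‖ + ‖if γ = 0 then (2 * Real.pi * I * κ : ℂ) else 0‖ := by
    intro γ
    simp only [hc0]
    split_ifs with h0
    · simp [h0, E_zero]
    · by_cases hl : l γ = 0
      · simp [hl]
      · have hγ := l1 γ hl
        rw [norm_mul, norm_E]
        simp [abs_of_pos hγ, abs_of_pos hpi]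
        have := mul_exp_neg_le (2 * Real.pi * γ)
        calc _ = ‖l γ‖ * (2 * Real.pi * γ * Real.exp (-(2 * Real.pi * γ))) := by ring
          _ ≤ ‖l γ‖ * 1 := by gcongr
          _ = _ := by ring
  have hfinsum : Summable fun γ : ℝ => ‖if γ = 0 then (2 * Real.pi * I * κ : ℂ) else 0‖ := by
    apply summable_of_ne_finset_zero (s := {0})
    intro γ hγ
    have : γ ≠ 0 := by simpa using hγ
    simp [this]
  set v : ℝ → ℂ := fun γ => c0 γ * E γ (1 * I) with hv
  have hvs : Summable fun γ => ‖v γ‖ :=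
    Summable.of_nonneg_of_le (fun _ => norm_nonneg _) hc0le (l2.add hfinsum)
  have hvx : ∀ x : ℝ, HasSum (fun γ => v γ * E γ x)
      (deriv (D a) (x + (H + 1 : ℝ) * I) / D a (x + (H + 1 : ℝ) * I)) := by
    intro x
    refine hs_congr (hc0sum (x + 1 * I) (by simp)) (fun γ => ?_) ?_
    · simp only [hv]; rw [E_add_arg]; ring
    · have : (x : ℂ) + (H + 1 : ℝ) * I = x + 1 * I + H * I := by push_cast; ring
      rw [this]
  have hGd : ∀ z : ℂ, 0 < z.im → DifferentiableAt ℂ (fun z => deriv (D a) z / D a z) z := by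
    intro z hz'
    refine DifferentiableAt.div ?_ (h.diff z) (hz z hz')
    have : deriv (D a) = D (fun γ => 2 * Real.pi * I * γ * a γ) := funext h.deriv_eq
    rw [this]
    exact h.derivGood.diff z
  set c : ℝ → ℂ := fun γ => v γ * E (-γ) ((H + 1 : ℝ) * I) with hc
  have hcc : ∀ y : ℝ, 0 < y → ∀ u : ℝ → ℂ, (Summable fun γ => ‖u γ‖) →
      (∀ x : ℝ, HasSum (fun γ => u γ * E γ x) (deriv (D a) (x + y * I) / D a (x + y * I))) →
      ∀ γ, u γ = c γ * E γ (y * I) := by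
    intro y hy u hu hux γ
    have : u γ * E (-γ) (y * I) = c γ := by
      rcases le_total y (H + 1) with hle | hle
      · obtain ⟨K, hK⟩ := strip_bound h hne hz (y₁ := y) (y₂ := H + 1) hy
        exact coeff_shift (G := fun z => deriv (D a) z / D a z) hle
          (fun z h1 _ => hGd z (hy.trans_le h1)) hK hu hvs hux hvx γ
      · obtain ⟨K, hK⟩ := strip_bound h hne hz (y₁ := H + 1) (y₂ := y) (by linarith)
        exact (coeff_shift (G := fun z => deriv (D a) z / D a z) hle
          (fun z h1 _ => hGd z (lt_of_lt_of_le (by linarith) h1)) hK hvs hu hvx hux γ).symm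
    rw [← this]
    have := E_mul_neg γ (y * I)
    linear_combination (-u γ) * this
  have hcform : ∀ γ, c γ = c0 γ * E (-γ) (H * I) := by
    intro γ
    simp only [hc, hv]
    have : ((H + 1 : ℝ) : ℂ) * I = 1 * I + H * I := by push_cast; ring
    rw [this, E_add_arg]
    linear_combination (c0 γ * E (-γ) (H * I)) * E_mul_neg γ (1 * I)
  refine ⟨c, fun y hy => ?_, fun z hz' => ?_, fun γ hγ => ?_, ?_⟩
  · obtain ⟨u, hu, hux⟩ := line_rep h hne hz hy
    refine hu.congr fun γ => ?_
    rw [hcc y hy u hu hux γ, norm_mul, norm_E]; simp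
  · obtain ⟨u, hu, hux⟩ := line_rep h hne hz hz'
    have e := Complex.re_add_im z
    have h1 := hux z.re
    rw [e] at h1
    refine hs_congr h1 (fun γ => ?_) rfl
    have e3 : E γ z = E γ z.re * E γ (z.im * I) := by rw [← E_add_arg, e]
    rw [hcc _ hz' u hu hux γ, e3]
    ring
  · have : l γ = 0 := by
      by_contra hh; linarith [l1 γ hh]
    rw [hcform]
    simp [hc0, this, hγ.ne]
  · refine Summable.of_nonneg_of_le (fun γ => div_nonneg (norm_nonneg _) γ.2.1.le) (fun γ => ?_)
      (((l2.mul_left (2 * Real.pi * Real.exp (2 * Real.pi * H)))).subtype (Set.Ioo (0:ℝ) 1))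
    have h0 : 0 < (γ : ℝ) := γ.2.1
    have h1 : (γ : ℝ) < 1 := γ.2.2
    rw [div_le_iff₀ h0, hcform, norm_mul, norm_E]
    simp only [hc0, if_neg h0.ne', add_zero, norm_mul, Complex.norm_real, Complex.norm_I,
      Real.norm_eq_abs, abs_of_pos hpi, Complex.norm_ofNat, mul_one, abs_of_pos h0,
      Function.comp]
    have : Real.exp (-(2 * Real.pi * -(γ : ℝ) * ((H : ℂ) * I).im)) ≤ Real.exp (2 * Real.pi * H) := by
      apply Real.exp_le_exp.2
      simp
      have : 2 * Real.pi * (γ : ℝ) * H ≤ 2 * Real.pi * 1 * H := by gcongr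
      linarith
    calc _ ≤ 2 * Real.pi * (γ : ℝ) * ‖l γ‖ * Real.exp (2 * Real.pi * H) := by gcongr
      _ = _ := by ring

end FQ

namespace FQ
variable {a : ℝ → ℂ} {M : ℝ}

/-- boundary integral over the rectangle `[x1,x2] × [-1,1]` -/
def Bd (f : ℂ → ℂ) (x1 x2 : ℝ) : ℂ :=
  (∫ x : ℝ in x1..x2, f (x - I)) - (∫ x : ℝ in x1..x2, f (x + I))
    + I * (∫ y : ℝ in (-1 : ℝ)..1, f (x2 + y * I)) - I * (∫ y : ℝ in (-1 : ℝ)..1, f (x1 + y * I))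

/-- continuity at the boundary of the rectangle -/
def BC (f : ℂ → ℂ) (x1 x2 : ℝ) : Prop :=
  (∀ x : ℝ, ContinuousAt f (x - I)) ∧ (∀ x : ℝ, ContinuousAt f (x + I)) ∧
  (∀ y : ℝ, |y| ≤ 1 → ContinuousAt f (x2 + y * I)) ∧
  (∀ y : ℝ, |y| ≤ 1 → ContinuousAt f (x1 + y * I))

lemma mem_uIcc_one {y : ℝ} (hy : y ∈ Set.uIcc (-1 : ℝ) 1) : |y| ≤ 1 := by
  rw [Set.uIcc_of_le (by norm_num)] at hy
  exact abs_le.2 hy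

lemma BC.ii {f : ℂ → ℂ} {x1 x2 : ℝ} (h : BC f x1 x2) :
    IntervalIntegrable (fun x : ℝ => f (x - I)) volume x1 x2 ∧
    IntervalIntegrable (fun x : ℝ => f (x + I)) volume x1 x2 ∧
    IntervalIntegrable (fun y : ℝ => f (x2 + y * I)) volume (-1) 1 ∧
    IntervalIntegrable (fun y : ℝ => f (x1 + y * I)) volume (-1) 1 := by
  obtain ⟨h1, h2, h3, h4⟩ := h
  refine ⟨ContinuousOn.intervalIntegrable fun x _ => ?_,
    ContinuousOn.intervalIntegrable fun x _ => ?_,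
    ContinuousOn.intervalIntegrable fun x hx => ?_,
    ContinuousOn.intervalIntegrable fun x hx => ?_⟩
  · exact (ContinuousAt.comp (f := fun x : ℝ => (x : ℂ) - I) (h1 x) (by fun_prop)).continuousWithinAt
  · exact (ContinuousAt.comp (f := fun x : ℝ => (x : ℂ) + I) (h2 x) (by fun_prop)).continuousWithinAt
  · exact (ContinuousAt.comp (f := fun y : ℝ => (x2 : ℂ) + y * I) (h3 x (mem_uIcc_one hx))
      (by fun_prop)).continuousWithinAt
  · exact (ContinuousAt.comp (f := fun y : ℝ => (x1 : ℂ) + y * I) (h4 x (mem_uIcc_one hx))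
      (by fun_prop)).continuousWithinAt

lemma BC.add {f g : ℂ → ℂ} {x1 x2 : ℝ} (h : BC f x1 x2) (h' : BC g x1 x2) :
    BC (fun z => f z + g z) x1 x2 :=
  ⟨fun x => (h.1 x).add (h'.1 x), fun x => (h.2.1 x).add (h'.2.1 x),
    fun x hx => (h.2.2.1 x hx).add (h'.2.2.1 x hx), fun x hx => (h.2.2.2 x hx).add (h'.2.2.2 x hx)⟩

lemma Bd_add {f g : ℂ → ℂ} {x1 x2 : ℝ} (h : BC f x1 x2) (h' : BC g x1 x2) :
    Bd (fun z => f z + g z) x1 x2 = Bd f x1 x2 + Bd g x1 x2 := by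
  obtain ⟨h1, h2, h3, h4⟩ := h.ii
  obtain ⟨k1, k2, k3, k4⟩ := h'.ii
  unfold Bd
  rw [intervalIntegral.integral_add h1 k1, intervalIntegral.integral_add h2 k2,
    intervalIntegral.integral_add h3 k3, intervalIntegral.integral_add h4 k4]
  ring

lemma Bd_const_mul {f : ℂ → ℂ} {x1 x2 : ℝ} (c : ℂ) :
    Bd (fun z => c * f z) x1 x2 = c * Bd f x1 x2 := by
  unfold Bd
  simp only [intervalIntegral.integral_const_mul]
  ring

lemma Bd_congr {f g : ℂ → ℂ} {x1 x2 : ℝ}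
    (h : ∀ z : ℂ, (|z.im| = 1 ∨ (|z.im| ≤ 1 ∧ (z.re = x1 ∨ z.re = x2))) → f z = g z) :
    Bd f x1 x2 = Bd g x1 x2 := by
  unfold Bd
  congr 1
  · congr 1
    · congr 1
      · exact intervalIntegral.integral_congr fun x _ => h _ (Or.inl (by simp))
      · exact intervalIntegral.integral_congr fun x _ => h _ (Or.inl (by simp))
    · congr 1
      exact intervalIntegral.integral_congr fun x hx => h _
        (Or.inr ⟨by simpa using mem_uIcc_one hx, by simp⟩)
  · congr 1
    exact intervalIntegral.integral_congr fun x hx => h _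
        (Or.inr ⟨by simpa using mem_uIcc_one hx, by simp⟩)

lemma Bd_zero {f : ℂ → ℂ} {x1 x2 : ℝ} (h12 : x1 ≤ x2)
    (h : ∀ z : ℂ, |z.im| ≤ 1 → x1 ≤ z.re → z.re ≤ x2 → DifferentiableAt ℂ f z) :
    Bd f x1 x2 = 0 := by
  have := Complex.integral_boundary_rect_eq_zero_of_differentiableOn f (x1 - I) (x2 + I) (by
    intro z hz
    rw [Complex.mem_reProdIm] at hz
    simp only [sub_re, ofReal_re, I_re, sub_zero, add_re, add_zero, sub_im, ofReal_im, I_im,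
      zero_sub, add_im, zero_add] at hz
    rw [Set.uIcc_of_le h12] at hz
    exact (h z (mem_uIcc_one hz.2) hz.1.1 hz.1.2).differentiableWithinAt)
  simp only [sub_re, ofReal_re, I_re, sub_zero, add_re, add_zero, sub_im, ofReal_im, I_im,
      zero_sub, add_im, zero_add, smul_eq_mul] at this
  unfold Bd
  rw [← this]
  push_cast
  simp only [neg_mul, one_mul, sub_eq_add_neg]

lemma log_neg_up {w : ℂ} (h : 0 < w.im) : Complex.log (-w) = Complex.log w - Real.pi * I := by
  simp [Complex.log, Complex.arg_neg_eq_arg_sub_pi_of_im_pos h, sub_mul]; ring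

lemma log_neg_down {w : ℂ} (h : w.im < 0) : Complex.log (-w) = Complex.log w + Real.pi * I := by
  simp [Complex.log, Complex.arg_neg_eq_arg_add_pi_of_im_neg h, add_mul]; ring

lemma BC_inv {x1 x2 b : ℝ} (h1 : x1 < b) (h2 : b < x2) : BC (fun z => (z - b)⁻¹) x1 x2 := by
  have key : ∀ z : ℂ, z - b ≠ 0 → ContinuousAt (fun z : ℂ => (z - b)⁻¹) z := by
    intro z hz
    exact ContinuousAt.inv₀ (by fun_prop) hz
  refine ⟨fun x => key _ fun h => ?_, fun x => key _ fun h => ?_, fun y _ => key _ fun h => ?_,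
    fun y _ => key _ fun h => ?_⟩
  · have := congrArg Complex.im h; simp at this
  · have := congrArg Complex.im h; simp at this
  · have := congrArg Complex.re h; simp at this; linarith
  · have := congrArg Complex.re h; simp at this; linarith

lemma Bd_inv {x1 x2 b : ℝ} (h1 : x1 < b) (h2 : b < x2) :
    Bd (fun z => (z - b)⁻¹) x1 x2 = 2 * Real.pi * I := by
  obtain ⟨i1, i2, i3, i4⟩ := (BC_inv h1 h2).ii
  have e1 : (∫ x : ℝ in x1..x2, ((x : ℂ) - I - b)⁻¹) =
      Complex.log (x2 - I - b) - Complex.log (x1 - I - b) := by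
    refine intervalIntegral.integral_eq_sub_of_hasDerivAt
      (f := fun x : ℝ => Complex.log (x - I - b)) (fun x _ => ?_) i1
    have : HasDerivAt (fun x : ℝ => (x : ℂ) - I - b) 1 x :=
      ((HasDerivAt.ofReal_comp (hasDerivAt_id x)).sub_const I).sub_const (b : ℂ)
    simpa using this.clog_real (Or.inr (by simp))
  have e2 : (∫ x : ℝ in x1..x2, ((x : ℂ) + I - b)⁻¹) =
      Complex.log (x2 + I - b) - Complex.log (x1 + I - b) := by
    refine intervalIntegral.integral_eq_sub_of_hasDerivAt
      (f := fun x : ℝ => Complex.log (x + I - b)) (fun x _ => ?_) i2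
    have : HasDerivAt (fun x : ℝ => (x : ℂ) + I - b) 1 x :=
      ((HasDerivAt.ofReal_comp (hasDerivAt_id x)).add_const I).sub_const (b : ℂ)
    simpa using this.clog_real (Or.inr (by simp))
  have e3 : I * (∫ y : ℝ in (-1 : ℝ)..1, ((x2 : ℂ) + y * I - b)⁻¹) =
      Complex.log (x2 + I - b) - Complex.log (x2 - I - b) := by
    rw [← intervalIntegral.integral_const_mul]
    have := intervalIntegral.integral_eq_sub_of_hasDerivAt (a := -1) (b := 1)
      (f := fun y : ℝ => Complex.log (x2 + y * I - b)) 
      (f' := fun y : ℝ => I * ((x2 : ℂ) + y * I - b)⁻¹) (fun y _ => ?_) (i3.const_mul I)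
    · rw [this]; simp [sub_eq_add_neg]
    have : HasDerivAt (fun y : ℝ => (x2 : ℂ) + y * I - b) I y := by
      simpa using
      (((HasDerivAt.ofReal_comp (hasDerivAt_id y)).mul_const I).const_add (x2 : ℂ)).sub_const (b : ℂ)
    simpa [div_eq_mul_inv] using this.clog_real (Or.inl (by simpa using h2))
  have e4 : I * (∫ y : ℝ in (-1 : ℝ)..1, ((x1 : ℂ) + y * I - b)⁻¹) =
      Complex.log (-(x1 + I - b)) - Complex.log (-(x1 - I - b)) := by
    rw [← intervalIntegral.integral_const_mul]
    have := intervalIntegral.integral_eq_sub_of_hasDerivAt (a := -1) (b := 1)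
      (f := fun y : ℝ => Complex.log (-(x1 + y * I - b))) 
      (f' := fun y : ℝ => I * ((x1 : ℂ) + y * I - b)⁻¹) (fun y _ => ?_) (i4.const_mul I)
    · rw [this]; simp [sub_eq_add_neg]
    have : HasDerivAt (fun y : ℝ => -((x1 : ℂ) + y * I - b)) (-I) y := by
      have h0 : HasDerivAt (fun y : ℝ => ((x1 : ℂ) + y * I - b)) I y := by
        simpa using
        (((HasDerivAt.ofReal_comp (hasDerivAt_id y)).mul_const I).const_add (x1 : ℂ)).sub_const
          (b : ℂ)
      exact h0.neg
    have h := this.clog_real (Or.inl (by simpa using h1))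
    rw [neg_div_neg_eq, div_eq_mul_inv] at h
    exact h
  unfold Bd
  simp only []
  rw [e1, e2, e3, e4, log_neg_up (by simp), log_neg_down (by simp)]
  ring

lemma Bd_finset {x1 x2 : ℝ} (h12 : x1 ≤ x2) (c : ℝ → ℂ) {H : ℂ → ℂ}
    (hH : ∀ z : ℂ, |z.im| ≤ 1 → DifferentiableAt ℂ H z ∨ ¬ (x1 ≤ z.re ∧ z.re ≤ x2))
    (hBC : BC H x1 x2) (Z : Finset ℝ)
    (hZ : ∀ b ∈ Z, x1 < b ∧ b < x2) :
    BC (fun z => (∑ b ∈ Z, c b * (z - b)⁻¹) + H z) x1 x2 ∧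
    Bd (fun z => (∑ b ∈ Z, c b * (z - b)⁻¹) + H z) x1 x2 = 2 * Real.pi * I * ∑ b ∈ Z, c b := by
  induction Z using Finset.induction_on with
  | empty =>
    simp only [Finset.sum_empty, zero_add, mul_zero]
    refine ⟨hBC, Bd_zero h12 fun z hz h1 h2 => ?_⟩
    rcases hH z hz with h | h
    · exact h
    · exact absurd ⟨h1, h2⟩ h
  | insert b Z hb ih =>
    obtain ⟨k1, k2⟩ := ih fun b hb => hZ b (Finset.mem_insert_of_mem hb)
    obtain ⟨l1, l2⟩ := hZ b (Finset.mem_insert_self _ _)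
    have l3 : BC (fun z => c b * (z - b)⁻¹) x1 x2 := by
      have := BC_inv l1 l2
      exact ⟨fun x => (this.1 x).const_mul _, fun x => (this.2.1 x).const_mul _,
        fun x hx => (this.2.2.1 x hx).const_mul _, fun x hx => (this.2.2.2 x hx).const_mul _⟩
    simp only [Finset.sum_insert hb, add_assoc]
    refine ⟨l3.add k1, ?_⟩
    rw [Bd_add l3 k1, k2, Bd_const_mul, Bd_inv l1 l2]
    ring
end FQ

namespace FQ
variable {a : ℝ → ℂ} {M : ℝ}

/-- local factorization at all real points -/
def Fac (Q : ℂ → ℂ) (k : ℝ → ℕ) : Prop :=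
  ∀ x : ℝ, ∃ g : ℂ → ℂ, Differentiable ℂ g ∧ g x ≠ 0 ∧ ∀ z, Q z = (z - (x : ℂ)) ^ (k x) * g z

lemma Fac.prod {Q : ℂ → ℂ} {k : ℝ → ℕ} (hQ : Differentiable ℂ Q) (h : Fac Q k) (Z : Finset ℝ) :
    ∃ G : ℂ → ℂ, Differentiable ℂ G ∧ (∀ z, Q z = (∏ b ∈ Z, (z - (b : ℂ)) ^ (k b)) * G z) ∧
      ∀ b ∈ Z, G b ≠ 0 := by
  induction Z using Finset.induction_on with
  | empty => exact ⟨Q, hQ, by simp, by simp⟩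
  | insert b Z hb ih =>
    obtain ⟨G, hG, hf, hn⟩ := ih
    obtain ⟨g, hg, hgb, hgf⟩ := h b
    set P : ℂ → ℂ := fun z => ∏ b ∈ Z, (z - (b : ℂ)) ^ (k b) with hP
    have hPd : Differentiable ℂ P := by
      rw [hP]; fun_prop
    have hPb : P b ≠ 0 := by
      simp only [hP]
      refine Finset.prod_ne_zero_iff.2 fun c hc => pow_ne_zero _ ?_
      rw [sub_ne_zero]
      intro e
      exact hb (by have := Complex.ofReal_injective e; rwa [this])
    have hcross : ∀ z, (z - (b : ℂ)) ^ (k b) * g z = P z * G z := fun z => by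
      rw [← hgf, hf]
    refine ⟨fun z => if z = b then g z / P z else G z / (z - b) ^ (k b), ?_, ?_, ?_⟩
    · intro z
      by_cases hz : z = b
      · have e : (fun z => if z = b then g z / P z else G z / (z - b) ^ (k b)) =ᶠ[𝓝 z]
            fun z => g z / P z := by
          have : ∀ᶠ w in 𝓝 z, P w ≠ 0 := by
            rw [hz]; exact hPd.continuous.continuousAt.eventually_ne hPb
          filter_upwards [this] with w hw
          split_ifs with h1
          · rfl
          · have : (w - (b : ℂ)) ^ (k b) ≠ 0 := pow_ne_zero _ (sub_ne_zero.2 h1)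
            rw [div_eq_div_iff this hw]
            linear_combination -hcross w
        refine DifferentiableAt.congr_of_eventuallyEq ?_ e
        exact (hg z).div (hPd z) (by rw [hz]; exact hPb)
      · have e : (fun z => if z = b then g z / P z else G z / (z - b) ^ (k b)) =ᶠ[𝓝 z]
            fun z => G z / (z - b) ^ (k b) := by
          filter_upwards [isOpen_ne.mem_nhds hz] with w hw
          rw [if_neg hw]
        refine DifferentiableAt.congr_of_eventuallyEq ?_ e
        exact (hG z).div (by fun_prop) (pow_ne_zero _ (sub_ne_zero.2 hz))
    · intro z
      rw [Finset.prod_insert hb]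
      change Q z = (z - b) ^ (k b) * P z *
        (if z = b then g z / P z else G z / (z - b) ^ (k b))
      split_ifs with h1
      · rw [hgf, mul_assoc, mul_div_cancel₀ _ (by rw [h1]; exact hPb)]
      · have : (z - (b : ℂ)) ^ (k b) ≠ 0 := pow_ne_zero _ (sub_ne_zero.2 h1)
        rw [hf]
        change P z * G z = _
        field_simp
    · intro c hc
      by_cases h1 : (c : ℂ) = b
      · simp only [h1, if_true]
        exact div_ne_zero hgb hPb
      · simp only [h1, if_false]
        refine div_ne_zero (hn c ?_) (pow_ne_zero _ (sub_ne_zero.2 h1))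
        rcases Finset.mem_insert.1 hc with h2 | h2
        · exact absurd (by rw [h2]) h1
        · exact h2

lemma diff_dslope {ψ : ℂ → ℂ} (hψ : ∀ z : ℂ, |z.im| ≤ 1 → DifferentiableAt ℂ ψ z) (b : ℝ)
    (z : ℂ) (hz : |z.im| ≤ 1) : DifferentiableAt ℂ (dslope ψ (b : ℂ)) z := by
  by_cases h : z = b
  · have ho : IsOpen {z : ℂ | |z.im| < 1} :=
      isOpen_lt (by fun_prop) (by fun_prop)
    have hm : {z : ℂ | |z.im| < 1} ∈ 𝓝 (b : ℂ) := ho.mem_nhds (by simp)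
    have := (Complex.differentiableOn_dslope hm).2
      (fun w (hw : |w.im| < 1) => (hψ w hw.le).differentiableWithinAt)
    rw [h]
    exact this.differentiableAt hm
  · exact (differentiableAt_dslope_of_ne h).2 (hψ z hz)

lemma residue {Q ψ : ℂ → ℂ} {k : ℝ → ℕ} (hQ : Differentiable ℂ Q) (h : Fac Q k)
    (hr : ∀ z, Q z = 0 → z.im = 0) (hψ : ∀ z : ℂ, |z.im| ≤ 1 → DifferentiableAt ℂ ψ z)
    {x1 x2 : ℝ} (h12 : x1 ≤ x2) (hx1 : Q x1 ≠ 0) (hx2 : Q x2 ≠ 0) (Z : Finset ℝ)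
    (hZ : ∀ b ∈ Z, x1 < b ∧ b < x2) (hZ' : ∀ x : ℝ, x1 ≤ x → x ≤ x2 → Q x = 0 → x ∈ Z) :
    Bd (fun z => deriv Q z / Q z * ψ z) x1 x2 = 2 * Real.pi * I * ∑ b ∈ Z, k b * ψ b := by
  obtain ⟨G, hG, hf, hn⟩ := h.prod hQ Z
  set P : ℂ → ℂ := fun z => ∏ b ∈ Z, (z - (b : ℂ)) ^ (k b) with hP
  set H : ℂ → ℂ := fun z => (∑ b ∈ Z, (k b : ℂ) * dslope ψ b z) + deriv G z / G z * ψ z with hH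
  have hGQ : ∀ z, Q z ≠ 0 → G z ≠ 0 := by
    intro z hz h0
    apply hz; rw [hf, h0, mul_zero]
  have hGz : ∀ z : ℂ, x1 ≤ z.re → z.re ≤ x2 → G z ≠ 0 := by
    intro z h1 h2 h0
    have hq : Q z = 0 := by rw [hf, h0, mul_zero]
    have him := hr z hq
    have hz : z = (z.re : ℂ) := Complex.ext (by simp) (by simp [him])
    rw [hz] at hq h0
    exact hn _ (hZ' _ h1 h2 hq) h0
  have hHd : ∀ z : ℂ, |z.im| ≤ 1 → G z ≠ 0 → DifferentiableAt ℂ H z := by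
    intro z hz hg
    have h1 : DifferentiableAt ℂ (fun z => ∑ b ∈ Z, (k b : ℂ) * dslope ψ b z) z :=
      DifferentiableAt.fun_sum fun b _ => (diff_dslope hψ b z hz).const_mul _
    have h2 : DifferentiableAt ℂ (deriv G) z := hG.deriv z
    exact h1.add ((h2.div (hG z) hg).mul (hψ z hz))
  have hline : ∀ (x y : ℝ), y ≠ 0 → Q (x + y * I) ≠ 0 := by
    intro x y hy h0
    exact hy (by simpa using hr _ h0)
  have hv : ∀ (x y : ℝ), Q x ≠ 0 → Q (x + y * I) ≠ 0 := by
    intro x y hx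
    by_cases hy : y = 0
    · simpa [hy] using hx
    · exact hline x y hy
  have hBC : BC H x1 x2 := by
    refine ⟨fun x => (hHd _ (by simp) (hGQ _ ?_)).continuousAt,
      fun x => (hHd _ (by simp) (hGQ _ ?_)).continuousAt,
      fun y hy => (hHd _ (by simpa using hy) (hGQ _ (hv _ _ hx2))).continuousAt,
      fun y hy => (hHd _ (by simpa using hy) (hGQ _ (hv _ _ hx1))).continuousAt⟩
    · simpa [sub_eq_add_neg] using hline x (-1) (by norm_num)
    · simpa using hline x 1 (by norm_num)
  have hfin := (Bd_finset h12 (fun b => (k b : ℂ) * ψ b) (H := H) (fun z hz => ?_) hBC Z hZ).2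
  · rw [← hfin]
    refine Bd_congr fun z hz => ?_
    have him1 : |z.im| ≤ 1 := by rcases hz with h | h; exacts [h.le, h.1]
    have hQz : Q z ≠ 0 := by
      rw [← Complex.re_add_im z]
      rcases hz with h | ⟨-, h | h⟩
      · refine hline _ _ fun h0 => ?_
        rw [h0] at h; norm_num at h
      · rw [h]; exact hv _ _ hx1
      · rw [h]; exact hv _ _ hx2
    have hPz : P z ≠ 0 := by
      intro h0; apply hQz; rw [hf]; change P z * _ = 0; rw [h0, zero_mul]
    have hzb : ∀ b ∈ Z, z - (b : ℂ) ≠ 0 := by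
      intro b hb h0
      have hzb := sub_eq_zero.1 h0
      rcases hz with h | ⟨-, h | h⟩
      · rw [hzb] at h; norm_num at h
      · rw [hzb] at h; simp at h; linarith [(hZ b hb).1]
      · rw [hzb] at h; simp at h; linarith [(hZ b hb).2]
    have e1 : deriv Q z / Q z = logDeriv P z + logDeriv G z := by
      have : Q = fun z => P z * G z := funext hf
      change logDeriv Q z = _
      rw [this]
      exact logDeriv_mul z hPz (hGQ z hQz) (by rw [hP]; fun_prop) (hG z)
    have e2 : logDeriv P z = ∑ b ∈ Z, (k b : ℂ) * (z - b)⁻¹ := by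
      rw [hP, logDeriv_prod (f := fun (b : ℝ) (z : ℂ) => (z - (b : ℂ)) ^ (k b))
        (fun b hb => pow_ne_zero _ (hzb b hb)) (fun b _ => by fun_prop)]
      refine Finset.sum_congr rfl fun b _ => ?_
      have := logDeriv_fun_pow (f := fun z : ℂ => z - (b : ℂ)) (x := z) (by fun_prop) (k b)
      rw [this, logDeriv_apply]
      simp [div_eq_mul_inv]
    rw [e1, e2, hH]
    simp only [logDeriv_apply]
    rw [add_mul, ← add_assoc, ← Finset.sum_add_distrib, Finset.sum_mul]
    congr 1
    refine Finset.sum_congr rfl fun b hb => ?_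
    have hd := sub_smul_dslope ψ (b : ℂ) z
    rw [smul_eq_mul] at hd
    have := hzb b hb
    have e3 : ψ z = ψ b + (z - b) * dslope ψ b z := by rw [hd]; ring
    generalize dslope ψ b z = w at *
    rw [e3]
    field_simp
  · by_cases h : x1 ≤ z.re ∧ z.re ≤ x2
    · exact Or.inl (hHd z hz (hGz z h.1 h.2))
    · exact Or.inr h
end FQ

namespace FQ
variable {a : ℝ → ℂ} {M : ℝ}

lemma Good.flip (h : Good a M) : Good (fun γ => a (-γ)) M := by
  refine ⟨?_, fun γ hγ => ?_⟩
  · exact (Equiv.neg ℝ).summable_iff.2 h.1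
  · have := h.2 _ hγ; rwa [abs_neg] at this

lemma D_flip (z : ℂ) : D (fun γ => a (-γ)) z = D a (-z) := by
  unfold D
  rw [← (Equiv.neg ℝ).tsum_eq (fun γ => a γ * E γ (-z))]
  refine tsum_congr fun γ => ?_
  simp [E_neg]

lemma deriv_flip (z : ℂ) :
    deriv (D (fun γ => a (-γ))) z = - deriv (D a) (-z) := by
  have : D (fun γ => a (-γ)) = fun z => D a (-z) := funext D_flip
  rw [this]
  exact deriv_comp_neg (D a) z

lemma line_bound (h : Good a M) (hne : ∃ γ, a γ ≠ 0) (hr : ∀ z, D a z = 0 → z.im = 0) :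
    ∃ K : ℝ, ∀ z : ℂ, |z.im| = 1 → ‖deriv (D a) z / D a z‖ ≤ K := by
  obtain ⟨K1, h1⟩ := strip_bound h hne (fun z hz h0 => hz.ne' (hr z h0)) (y₁ := 1) (y₂ := 1)
    one_pos
  have hne' : ∃ γ, (fun γ => a (-γ)) γ ≠ 0 := by
    obtain ⟨γ, hγ⟩ := hne; exact ⟨-γ, by simpa using hγ⟩
  obtain ⟨K2, h2⟩ := strip_bound h.flip hne' (fun z hz h0 => by
    rw [D_flip] at h0
    have := hr _ h0
    simp at this
    exact hz.ne' this) (y₁ := 1) (y₂ := 1) one_pos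
  refine ⟨max K1 K2, fun z hz => ?_⟩
  rcases (abs_eq zero_le_one).1 hz with h' | h'
  · exact (h1 z h'.ge h'.le).trans (le_max_left _ _)
  · have := h2 (-z) (by simp [h']) (by simp [h'])
    rw [deriv_flip, D_flip, neg_neg, neg_div, norm_neg] at this
    exact this.trans (le_max_right _ _)

lemma vert_bound (h : Good a M) (hne : ∃ γ, a γ ≠ 0) (hr : ∀ z, D a z = 0 → z.im = 0) :
    ∃ K : ℝ, ∀ n : ℕ, ∃ x1 x2 : ℝ, x1 ≤ -n ∧ (n : ℝ) ≤ x2 ∧ D a x1 ≠ 0 ∧ D a x2 ≠ 0 ∧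
      (∀ y : ℝ, |y| ≤ 1 → ‖deriv (D a) (x1 + y * I) / D a (x1 + y * I)‖ ≤ K) ∧
      (∀ y : ℝ, |y| ≤ 1 → ‖deriv (D a) (x2 + y * I) / D a (x2 + y * I)‖ ≤ K) := by
  obtain ⟨x0, hx0⟩ : ∃ x : ℝ, D a x ≠ 0 := by
    by_contra hc
    push Not at hc
    obtain ⟨γ, hγ⟩ := hne
    exact hγ (h.zero_of hc γ)
  have hv : ∀ (y : ℝ), D a (x0 + y * I) ≠ 0 := by
    intro y h0
    have := hr _ h0
    simp at this
    rw [this] at h0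
    simp at h0
    exact hx0 h0
  obtain ⟨m0, hm0, hm⟩ : ∃ m0 : ℝ, 0 < m0 ∧ ∀ y : ℝ, |y| ≤ 1 → m0 ≤ ‖D a (x0 + y * I)‖ := by
    have hc : Continuous fun y : ℝ => ‖D a (x0 + y * I)‖ := by
      have := h.diff.continuous
      fun_prop
    obtain ⟨y, -, hy⟩ := isCompact_Icc (a := (-1 : ℝ)) (b := 1) |>.exists_isMinOn
      ⟨0, by simp⟩ hc.continuousOn
    exact ⟨_, norm_pos_iff.2 (hv y), fun y' hy' => hy (abs_le.1 hy')⟩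
  set W := Real.exp (2 * Real.pi * M * 1) with hW
  have hWp : 0 < W := Real.exp_pos _
  set B := (∑' γ : ℝ, ‖2 * ↑Real.pi * Complex.I * ↑γ * a γ‖) * W with hB
  have key : ∀ T : ℝ, ∑' γ : ℝ, ‖a γ‖ * ‖E γ T - 1‖ < m0 / 2 / W → ∀ y : ℝ, |y| ≤ 1 →
      m0 / 2 ≤ ‖D a ((x0 + T : ℝ) + y * I)‖ := by
    intro T hT y hy
    have h1 := h.dist (χ := fun γ => E γ T) (χ' := fun _ => 1) (fun γ => norm_E_real γ T)
      (fun _ => by simp) (z := x0 + y * I) (Y := 1) (by simpa using hy)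
    have h2 : D a ((x0 + T : ℝ) + y * I) = D (fun γ => a γ * E γ T) (x0 + y * I) := by
      rw [← D_translate]; congr 1; push_cast; ring
    simp only [mul_one] at h1
    rw [← h2] at h1
    have h3 : (∑' γ : ℝ, ‖a γ‖ * ‖E γ T - 1‖) * W ≤ m0 / 2 := by
      rw [← le_div_iff₀ hWp]; exact hT.le
    rw [hW, mul_one] at h3
    have h4 := norm_sub_norm_le (D a (x0 + y * I)) (D a ((x0 + T : ℝ) + y * I))
    rw [norm_sub_rev] at h4
    have := hm y hy
    linarith
  have key2 : ∀ T : ℝ, ∑' γ : ℝ, ‖a γ‖ * ‖E γ T - 1‖ < m0 / 2 / W → D a (x0 + T : ℝ) ≠ 0 ∧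
      ∀ y : ℝ, |y| ≤ 1 → ‖deriv (D a) ((x0 + T : ℝ) + y * I) / D a ((x0 + T : ℝ) + y * I)‖
        ≤ B / (m0 / 2) := by
    intro T hT
    constructor
    · have := key T hT 0 (by simp)
      intro h0
      simp only [ofReal_zero, zero_mul, add_zero] at this
      rw [h0] at this
      simp at this; linarith
    · intro y hy
      rw [norm_div]
      have h1 : ‖deriv (D a) ((x0 + T : ℝ) + y * I)‖ ≤ B := by
        rw [h.deriv_eq]
        exact h.derivGood.norm_le (by simpa using hy)
      exact div_le_div₀ ((norm_nonneg _).trans h1) h1 (by positivity) (key T hT y hy)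
  refine ⟨B / (m0 / 2), fun n => ?_⟩
  obtain ⟨T, hT, hT2⟩ := h.recur (ε := m0 / 2 / W) (by positivity) (n + ⌈|x0|⌉₊)
  have hT3 : (n : ℝ) + |x0| ≤ T := by
    refine le_trans ?_ hT
    push_cast
    linarith [Nat.le_ceil |x0|]
  have hT4 : ∑' γ : ℝ, ‖a γ‖ * ‖E γ (-T : ℝ) - 1‖ < m0 / 2 / W := by
    convert hT2 using 4 with γ
    have : E γ (-T : ℝ) - 1 = (starRingEnd ℂ) (E γ T - 1) := by
      rw [map_sub, E_conj, E_neg]; simp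
    rw [this, Complex.norm_conj]
  obtain ⟨p1, p2⟩ := key2 _ hT4
  obtain ⟨p3, p4⟩ := key2 _ hT2
  refine ⟨x0 + -T, x0 + T, ?_, ?_, p1, p3, p2, p4⟩
  · linarith [le_abs_self x0]
  · linarith [neg_abs_le x0]

lemma Fac.finite {Q : ℂ → ℂ} {k : ℝ → ℕ} (h : Fac Q k) (x1 x2 : ℝ) :
    {x : ℝ | x ∈ Set.Icc x1 x2 ∧ Q x = 0}.Finite := by
  by_contra hinf
  obtain ⟨x, -, hx⟩ := Set.Infinite.exists_accPt_of_subset_isCompact hinf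
    (isCompact_Icc (a := x1) (b := x2)) (fun x hx => hx.1)
  obtain ⟨g, hg, hgx, hgf⟩ := h x
  rw [accPt_iff_frequently] at hx
  have : ∀ᶠ y : ℝ in 𝓝 x, g y ≠ 0 := by
    have hc : ContinuousAt (fun y : ℝ => g y) x := by
      have := hg.continuous
      fun_prop
    exact hc.eventually_ne hgx
  obtain ⟨y, ⟨hy1, -, hy2⟩, hy3⟩ := (hx.and_eventually this).exists
  rw [hgf] at hy2
  rcases mul_eq_zero.1 hy2 with h1 | h1
  · refine pow_ne_zero _ ?_ h1
    rw [sub_ne_zero]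
    exact_mod_cast hy1
  · exact hy3 h1

lemma Fac.zero {Q : ℂ → ℂ} {k : ℝ → ℕ} (h : Fac Q k) {x : ℝ} (hx : k x ≠ 0) : Q x = 0 := by
  obtain ⟨g, hg, hgx, hgf⟩ := h x
  rw [hgf, sub_self, zero_pow hx, zero_mul]
end FQ

namespace FQ
variable {a : ℝ → ℂ} {M : ℝ}

/-- admissible test functions on the strip `|Im z| ≤ 1` -/
def Adm (ψ : ℂ → ℂ) (C : ℝ) : Prop :=
  (∀ z : ℂ, |z.im| ≤ 1 → DifferentiableAt ℂ ψ z) ∧ ∀ z : ℂ, |z.im| ≤ 1 → ‖ψ z‖ ≤ C * (1 + z.re ^ 2)⁻¹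

def LF (a : ℝ → ℂ) (z : ℂ) : ℂ := deriv (D a) z / D a z

lemma exhaust (h : Good a M) (hne : ∃ γ, a γ ≠ 0) (hr : ∀ z, D a z = 0 → z.im = 0)
    {k : ℝ → ℕ} (hk : Fac (D a) k) :
    ∃ Z : ℕ → Finset ℝ, (∀ (n : ℕ) (b : ℝ), k b ≠ 0 → |b| ≤ n → b ∈ Z n) ∧
      ∀ ψ C, Adm ψ C → 
        Tendsto (fun n => 2 * Real.pi * I * ∑ b ∈ Z n, k b * ψ b) atTop
          (𝓝 ((∫ x : ℝ, LF a (x - I) * ψ (x - I)) - ∫ x : ℝ, LF a (x + I) * ψ (x + I))) := by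
  obtain ⟨K, hK⟩ := vert_bound h hne hr
  choose x1 x2 h1 h2 q1 q2 b1 b2 using hK
  obtain ⟨L, hL⟩ := line_bound h hne hr
  have hle : ∀ n, x1 n ≤ x2 n := fun n => by
    have : (0 : ℝ) ≤ n := n.cast_nonneg
    linarith [h1 n, h2 n]
  refine ⟨fun n => (hk.finite (x1 n) (x2 n)).toFinset, ?_, ?_⟩
  · intro n b hb hbn
    have := abs_le.1 hbn
    simp only [Set.Finite.mem_toFinset, Set.mem_ofPred_eq, Set.mem_Icc]
    exact ⟨⟨by linarith [h1 n], by linarith [h2 n]⟩, hk.zero hb⟩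
  intro ψ C hψ
  have hlim1 : Tendsto x1 atTop atBot :=
    tendsto_atBot_mono h1 (tendsto_neg_atTop_atBot.comp tendsto_natCast_atTop_atTop)
  have hlim2 : Tendsto x2 atTop atTop := tendsto_atTop_mono h2 tendsto_natCast_atTop_atTop
  have hres : ∀ n, 2 * Real.pi * I * ∑ b ∈ (hk.finite (x1 n) (x2 n)).toFinset, k b * ψ b =
      Bd (fun z => LF a z * ψ z) (x1 n) (x2 n) := by
    intro n
    refine (residue h.diff hk hr hψ.1 (hle n) (q1 n) (q2 n) _ ?_ ?_).symm
    · intro b hb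
      simp only [Set.Finite.mem_toFinset, Set.mem_ofPred_eq, Set.mem_Icc] at hb
      refine ⟨lt_of_le_of_ne hb.1.1 ?_, lt_of_le_of_ne hb.1.2 ?_⟩
      · intro e; rw [← e] at hb; exact q1 n hb.2
      · intro e; rw [e] at hb; exact q2 n hb.2
    · intro x hx1 hx2 hx
      simp only [Set.Finite.mem_toFinset, Set.mem_ofPred_eq, Set.mem_Icc]
      exact ⟨⟨hx1, hx2⟩, hx⟩
  simp only [hres]
  have hcont : ∀ z : ℂ, |z.im| = 1 → ContinuousAt (fun z => LF a z * ψ z) z := by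
    intro z hz
    have hQ : D a z ≠ 0 := fun h0 => by rw [hr z h0] at hz; norm_num at hz
    have h2 : DifferentiableAt ℂ (deriv (D a)) z := h.diff.deriv z
    exact ((h2.div (h.diff z) hQ).mul (hψ.1 z hz.le)).continuousAt
  have hbd : ∀ z : ℂ, |z.im| = 1 → ‖LF a z * ψ z‖ ≤ L * C * (1 + z.re ^ 2)⁻¹ := by
    intro z hz
    rw [norm_mul, mul_assoc]
    exact mul_le_mul (hL z hz) (hψ.2 z hz.le) (norm_nonneg _) ((norm_nonneg _).trans (hL z hz))
  have int1 : Integrable fun x : ℝ => LF a (x - I) * ψ (x - I) := by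
    refine Integrable.mono' (integrable_inv_one_add_sq.const_mul (L * C)) ?_ ?_
    · refine Continuous.aestronglyMeasurable ?_
      rw [continuous_iff_continuousAt]
      intro x
      exact ContinuousAt.comp (f := fun x : ℝ => (x : ℂ) - I) (hcont _ (by simp)) (by fun_prop)
    · refine ae_of_all _ fun x => ?_
      simpa using hbd (x - I) (by simp)
  have int2 : Integrable fun x : ℝ => LF a (x + I) * ψ (x + I) := by
    refine Integrable.mono' (integrable_inv_one_add_sq.const_mul (L * C)) ?_ ?_
    · refine Continuous.aestronglyMeasurable ?_
      rw [continuous_iff_continuousAt]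
      intro x
      exact ContinuousAt.comp (f := fun x : ℝ => (x : ℂ) + I) (hcont _ (by simp)) (by fun_prop)
    · refine ae_of_all _ fun x => ?_
      simpa using hbd (x + I) (by simp)
  have vert : ∀ X : ℕ → ℝ, (∀ n : ℕ, (n : ℝ) ^ 2 ≤ X n ^ 2) →
      (∀ n, ∀ y : ℝ, |y| ≤ 1 → ‖deriv (D a) (X n + y * I) / D a (X n + y * I)‖ ≤ K) →
      Tendsto (fun n => I * ∫ y : ℝ in (-1 : ℝ)..1, LF a (X n + y * I) * ψ (X n + y * I)) atTop
        (𝓝 0) := by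
    intro X hX hb
    have hC : 0 ≤ C := by
      have := (norm_nonneg _).trans (hψ.2 0 (by simp))
      simpa using this
    have hK0 : 0 ≤ K := (norm_nonneg _).trans (hb 0 0 (by simp))
    have e : ∀ n, ‖I * ∫ y : ℝ in (-1 : ℝ)..1, LF a (X n + y * I) * ψ (X n + y * I)‖ ≤
        K * (C * (1 + (n : ℝ) ^ 2)⁻¹) * |1 - (-1)| := by
      intro n
      rw [norm_mul, norm_I, one_mul]
      refine intervalIntegral.norm_integral_le_of_norm_le_const fun y hy => ?_
      have hy1 : |y| ≤ 1 := mem_uIcc_one (Set.uIoc_subset_uIcc hy)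
      rw [norm_mul]
      refine mul_le_mul (hb n y hy1) ?_ (norm_nonneg _) hK0
      refine (hψ.2 _ (by simpa using hy1)).trans ?_
      refine mul_le_mul_of_nonneg_left ?_ hC
      refine inv_anti₀ (by positivity) ?_
      have := hX n
      simp; exact this
    refine squeeze_zero_norm e ?_
    have t1 : Tendsto (fun n : ℕ => (1 + (n : ℝ) ^ 2)⁻¹) atTop (𝓝 0) := by
      refine tendsto_inv_atTop_zero.comp ?_
      refine tendsto_atTop_add_const_left _ _ ?_
      exact (tendsto_pow_atTop two_ne_zero).comp tendsto_natCast_atTop_atTop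
    have := ((t1.const_mul C).const_mul K).mul_const |(1 : ℝ) - (-1)|
    simpa using this
  have v1 := vert x1 (fun n => by
    have : (0 : ℝ) ≤ n := n.cast_nonneg
    nlinarith [h1 n]) b1
  have v2 := vert x2 (fun n => by
    have : (0 : ℝ) ≤ n := n.cast_nonneg
    nlinarith [h2 n]) b2
  have t1 := intervalIntegral_tendsto_integral int1 hlim1 hlim2
  have t2 := intervalIntegral_tendsto_integral int2 hlim1 hlim2
  have := ((t1.sub t2).add v2).sub v1
  simpa [Bd] using this

lemma adm_inv : Adm (fun z => (z ^ 2 + 4)⁻¹) 1 := by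
  have key : ∀ z : ℂ, |z.im| ≤ 1 → (1 + z.re ^ 2) ≤ ‖z ^ 2 + 4‖ := by
    intro z hz
    have e : z ^ 2 + 4 = (z - 2 * I) * (z + 2 * I) := by
      linear_combination 4 * Complex.I_sq
    obtain ⟨l1, l2⟩ := abs_le.1 hz
    have n1 : 1 + z.re ^ 2 ≤ ‖z - 2 * I‖ ^ 2 := by
      rw [← Complex.normSq_eq_norm_sq, Complex.normSq_apply]
      simp; nlinarith
    have n2 : 1 + z.re ^ 2 ≤ ‖z + 2 * I‖ ^ 2 := by
      rw [← Complex.normSq_eq_norm_sq, Complex.normSq_apply]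
      simp; nlinarith
    rw [e, norm_mul]
    refine (le_abs_self _).trans (abs_le_of_sq_le_sq ?_ (by positivity))
    rw [mul_pow, sq]
    exact mul_le_mul n1 n2 (by positivity) (by positivity)
  constructor
  · intro z hz
    have := key z hz
    have h0 : z ^ 2 + 4 ≠ 0 := by
      rw [← norm_pos_iff]
      nlinarith [sq_nonneg z.re]
    exact DifferentiableAt.inv (by fun_prop) h0
  · intro z hz
    rw [norm_inv, one_mul]
    exact inv_anti₀ (by positivity) (key z hz)

lemma limit_main (h : Good a M) (hne : ∃ γ, a γ ≠ 0) (hr : ∀ z, D a z = 0 → z.im = 0)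
    {k : ℝ → ℕ} (hk : Fac (D a) k) :
    (Summable fun b : ℝ => (k b : ℝ) * (1 + b ^ 2)⁻¹) ∧
      ∀ ψ C, Adm ψ C → 
        2 * Real.pi * I * ∑' b : ℝ, k b * ψ b =
          (∫ x : ℝ, LF a (x - I) * ψ (x - I)) - ∫ x : ℝ, LF a (x + I) * ψ (x + I) := by
  obtain ⟨Z, hZ, hlim⟩ := exhaust h hne hr hk
  have hex : ∀ b : ℝ, k b ≠ 0 → ∀ᶠ n in atTop, b ∈ Z n := by
    intro b hb
    filter_upwards [eventually_ge_atTop ⌈|b|⌉₊] with n hn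
    exact hZ n b hb ((Nat.le_ceil _).trans (by exact_mod_cast hn))
  have hs0 : Summable fun b : ℝ => (k b : ℝ) * (b ^ 2 + 4)⁻¹ := by
    have hl := hlim _ _ adm_inv
    obtain ⟨B, hB⟩ := (hl.norm.isBoundedUnder_le).eventually_le
    refine summable_of_sum_le (c := B / (2 * Real.pi)) (fun b => by positivity) fun s => ?_
    have hall : ∀ᶠ n in atTop, ∀ b ∈ s, k b ≠ 0 → b ∈ Z n := by
      rw [Filter.eventually_all_finset]
      intro b _
      by_cases hb : k b = 0
      · simp [hb]
      · filter_upwards [hex b hb] with n hn _ using hn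
    obtain ⟨n, hn1, hn2⟩ := (hB.and hall).exists
    have e : (2 * Real.pi * I * ∑ b ∈ Z n, (k b : ℂ) * ((b : ℂ) ^ 2 + 4)⁻¹) =
        2 * Real.pi * I * ((∑ b ∈ Z n, (k b : ℝ) * (b ^ 2 + 4)⁻¹ : ℝ) : ℂ) := by
      push_cast; rfl
    have hnn : 0 ≤ ∑ b ∈ Z n, (k b : ℝ) * (b ^ 2 + 4)⁻¹ :=
      Finset.sum_nonneg fun b _ => by positivity
    rw [e, norm_mul, norm_real, Real.norm_of_nonneg hnn] at hn1
    have e2 : ‖(2 * Real.pi * I : ℂ)‖ = 2 * Real.pi := by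
      simp [abs_of_pos Real.pi_pos]
    rw [e2] at hn1
    rw [le_div_iff₀ (by positivity), mul_comm]
    refine le_trans ?_ hn1
    refine mul_le_mul_of_nonneg_left ?_ (by positivity)
    rw [← Finset.sum_filter_add_sum_filter_not s (fun b => k b ≠ 0)]
    have : ∑ b ∈ s with ¬ (k b ≠ 0), (k b : ℝ) * (b ^ 2 + 4)⁻¹ = 0 := by
      refine Finset.sum_eq_zero fun b hb => ?_
      have := (Finset.mem_filter.1 hb).2
      push Not at this
      simp [this]
    rw [this, add_zero]
    refine Finset.sum_le_sum_of_subset_of_nonneg ?_ fun b _ _ => by positivity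
    intro b hb
    obtain ⟨p1, p2⟩ := Finset.mem_filter.1 hb
    exact hn2 b p1 p2
  have hs : Summable fun b : ℝ => (k b : ℝ) * (1 + b ^ 2)⁻¹ := by
    refine Summable.of_nonneg_of_le (fun b => by positivity) (fun b => ?_) (hs0.mul_left 4)
    rw [mul_left_comm]
    refine mul_le_mul_of_nonneg_left ?_ (by positivity)
    rw [← div_eq_mul_inv, inv_eq_one_div, div_le_div_iff₀ (by positivity) (by positivity)]
    nlinarith [sq_nonneg b]
  refine ⟨hs, fun ψ C hψ => ?_⟩
  have hC : 0 ≤ C := by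
    have := (norm_nonneg _).trans (hψ.2 0 (by simp))
    simpa using this
  refine tendsto_nhds_unique ?_ (hlim ψ C hψ)
  refine Tendsto.const_mul _ ?_
  classical
  have hb : ∀ b : ℝ, ‖(k b : ℂ) * ψ b‖ ≤ C * ((k b : ℝ) * (1 + b ^ 2)⁻¹) := by
    intro b
    rw [norm_mul, Complex.norm_natCast, mul_left_comm]
    refine mul_le_mul_of_nonneg_left ?_ (by positivity)
    simpa using hψ.2 b (by simp)
  have := tendsto_tsum_of_dominated_convergence (𝓕 := atTop)
    (f := fun (n : ℕ) (b : ℝ) => if b ∈ Z n then (k b : ℂ) * ψ b else 0)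
    (g := fun b : ℝ => (k b : ℂ) * ψ b) (hs.mul_left C) ?_ ?_
  · refine this.congr fun n => ?_
    rw [tsum_eq_sum (s := Z n) (fun b hb => if_neg hb)]
    exact Finset.sum_congr rfl fun b hb => if_pos hb
  · intro b
    by_cases hb : k b = 0
    · simp [hb]
    · refine tendsto_const_nhds.congr' ?_
      filter_upwards [hex b hb] with n hn
      rw [if_pos hn]
  · refine Eventually.of_forall fun n b => ?_
    split_ifs
    · exact hb b
    · rw [norm_zero]; positivity
end FQ

namespace FQ
variable {a : ℝ → ℂ} {M : ℝ}

/-- Fourier-Laplace transform -/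
def FL (φ : ℝ → ℂ) (z : ℂ) : ℂ := ∫ t : ℝ, φ t * E (-t) z

lemma cont_E_fst (z : ℂ) : Continuous fun t : ℝ => E (-t) z := by
  unfold E; fun_prop

lemma deriv_E_fst (z : ℂ) (t : ℝ) :
    HasDerivAt (fun t : ℝ => E (-t) z) (-(2 * Real.pi * I * z) * E (-t) z) t := by
  unfold E
  have h1 : HasDerivAt (fun t : ℝ => 2 * Real.pi * Complex.I * z * ((-t : ℝ) : ℂ))
      (-(2 * Real.pi * I * z)) t := by
    have := (HasDerivAt.ofReal_comp (hasDerivAt_id t).neg).const_mul (2 * Real.pi * Complex.I * z)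
    simpa using this
  have := h1.cexp
  rw [mul_comm (-(2 * Real.pi * I * z))]
  exact this

lemma FL_int {φ : ℝ → ℂ} (hc : Continuous φ) (hs : HasCompactSupport φ) (z : ℂ) :
    Integrable fun t : ℝ => φ t * E (-t) z :=
  (hc.mul (cont_E_fst z)).integrable_of_hasCompactSupport hs.mul_right

lemma norm_E_le' {z : ℂ} {Y : ℝ} (hz : |z.im| ≤ Y) (t : ℝ) :
    ‖E (-t) z‖ ≤ Real.exp (2 * Real.pi * Y * |t|) := by
  rw [norm_E]
  refine Real.exp_le_exp.2 ?_
  have h1 : t * z.im ≤ |t| * Y := by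
    refine (le_abs_self _).trans ?_
    rw [abs_mul]
    exact mul_le_mul_of_nonneg_left hz (abs_nonneg _)
  have := mul_le_mul_of_nonneg_left h1 (by positivity : 0 ≤ 2 * Real.pi)
  linarith

lemma FL_bound {φ : ℝ → ℂ} (hc : Continuous φ) (hs : HasCompactSupport φ) :
    ∃ C : ℝ, 0 ≤ C ∧ ∀ z : ℂ, |z.im| ≤ 1 → ‖FL φ z‖ ≤ C := by
  refine ⟨∫ t : ℝ, ‖φ t‖ * Real.exp (2 * Real.pi * 1 * |t|),
    integral_nonneg fun t => by positivity, fun z hz => ?_⟩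
  refine (norm_integral_le_integral_norm _).trans ?_
  refine integral_mono (FL_int hc hs z).norm ?_ fun t => ?_
  · refine Continuous.integrable_of_hasCompactSupport (by fun_prop) ?_
    exact hs.norm.mul_right
  · simp only [norm_mul]
    exact mul_le_mul_of_nonneg_left (norm_E_le' hz t) (norm_nonneg _)

lemma FL_diff {φ : ℝ → ℂ} (hc : Continuous φ) (hs : HasCompactSupport φ) :
    Differentiable ℂ (FL φ) := by
  intro z
  have hmeas : ∀ w, Continuous fun t : ℝ => φ t * (2 * Real.pi * I * (-t : ℝ) * E (-t) w) := by
    intro w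
    have := cont_E_fst w
    fun_prop
  have := hasDerivAt_integral_of_dominated_loc_of_deriv_le (μ := volume)
    (F := fun (z : ℂ) (t : ℝ) => φ t * E (-t) z) (x₀ := z) (s := ball z 1)
    (F' := fun (z : ℂ) (t : ℝ) => φ t * (2 * Real.pi * I * (-t : ℝ) * E (-t) z))
    (bound := fun t => ‖φ t‖ * (2 * Real.pi * |t| * Real.exp (2 * Real.pi * (|z.im| + 1) * |t|)))
    (ball_mem_nhds z one_pos) ?_ (FL_int hc hs z) ?_ ?_ ?_ ?_
  · exact this.2.differentiableAt
  · exact Eventually.of_forall fun w => (FL_int hc hs w).aestronglyMeasurable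
  · exact (hmeas z).aestronglyMeasurable
  · refine ae_of_all _ fun t w hw => ?_
    rw [norm_mul, norm_mul]
    refine mul_le_mul_of_nonneg_left ?_ (norm_nonneg _)
    have e : ‖(2 * Real.pi * I * (-t : ℝ) : ℂ)‖ = 2 * Real.pi * |t| := by
      simp [abs_of_pos Real.pi_pos]
    rw [e]
    refine mul_le_mul_of_nonneg_left (norm_E_le' ?_ t) (by positivity)
    have h1 : |(w - z).im| ≤ ‖w - z‖ := Complex.abs_im_le_norm _
    rw [mem_ball, dist_eq_norm] at hw
    have h2 : |w.im| ≤ |z.im| + |(w - z).im| := by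
      have : w.im = z.im + (w - z).im := by simp
      rw [this]; exact (abs_add_le _ _)
    linarith
  · refine Continuous.integrable_of_hasCompactSupport (by fun_prop) ?_
    exact hs.norm.mul_right
  · refine ae_of_all _ fun t w hw => ?_
    exact (hasDerivAt_E (-t) w).const_mul (φ t)

lemma FL_deriv {φ : ℝ → ℂ} (hc : ContDiff ℝ 1 φ) (hs : HasCompactSupport φ) (z : ℂ) :
    FL (deriv φ) z = 2 * Real.pi * I * z * FL φ z := by
  have hc' : Continuous (deriv φ) := hc.continuous_deriv le_rfl
  have hd : ∀ t, HasDerivAt φ (deriv φ t) t := fun t =>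
    (hc.differentiable one_ne_zero t).hasDerivAt
  have h1 : Integrable fun t : ℝ => E (-t) z * φ t := by
    simpa only [mul_comm] using FL_int hc.continuous hs z
  have h2 : Integrable fun t : ℝ => E (-t) z * deriv φ t := by
    simpa only [mul_comm] using FL_int hc' hs.deriv z
  have h3 : Integrable fun t : ℝ => -(2 * Real.pi * I * z) * E (-t) z * φ t := by
    simpa only [mul_assoc] using h1.const_mul (-(2 * Real.pi * I * z))
  have := integral_mul_deriv_eq_deriv_mul_of_integrable (u := fun t : ℝ => E (-t) z) (v := φ)
    (fun t _ => deriv_E_fst z t) (fun t _ => hd t) h2 h3 h1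
  unfold FL
  calc ∫ t, deriv φ t * E (-t) z = ∫ t, E (-t) z * deriv φ t := by simp only [mul_comm]
    _ = _ := this
    _ = -∫ t, -(2 * Real.pi * I * z) * (φ t * E (-t) z) := by
      congr 1
      refine integral_congr_ae (ae_of_all _ fun t => ?_)
      simp only []; ring
    _ = _ := by
      rw [integral_const_mul]; ring

lemma FL_adm {φ : ℝ → ℂ} (hc : ContDiff ℝ 2 φ) (hs : HasCompactSupport φ) :
    ∃ C, Adm (FL φ) C := by
  have hc1 : ContDiff ℝ 1 (deriv φ) := by
    have : ContDiff ℝ (1 + 1) φ := by norm_num; exact hc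
    exact (contDiff_succ_iff_deriv.1 this).2.2
  have hc2 : Continuous (deriv (deriv φ)) := hc1.continuous_deriv le_rfl
  obtain ⟨C0, hC0, h0⟩ := FL_bound hc.continuous hs
  obtain ⟨C2, hC2, h2⟩ := FL_bound hc2 hs.deriv.deriv
  refine ⟨C0 + C2, fun z _ => FL_diff hc.continuous hs z, fun z hz => ?_⟩
  rw [← div_eq_mul_inv, le_div_iff₀ (by positivity)]
  have e := FL_deriv hc1 hs.deriv z
  rw [FL_deriv (hc.of_le (by norm_num)) hs] at e
  have en := congrArg norm e
  have e2 : ‖(2 * Real.pi * I * z : ℂ)‖ = 2 * Real.pi * ‖z‖ := by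
    simp [abs_of_pos Real.pi_pos]
  rw [norm_mul (2 * Real.pi * I * z : ℂ) _, norm_mul (2 * Real.pi * I * z : ℂ) (FL φ z), e2] at en
  have hz2 := h2 z hz
  rw [en] at hz2
  have hx : z.re ^ 2 ≤ ‖z‖ ^ 2 := by
    rw [← sq_abs]; exact pow_le_pow_left₀ (abs_nonneg _) (Complex.abs_re_le_norm z) 2
  have hn := norm_nonneg (FL φ z)
  have h3 : ‖z‖ ^ 2 * ‖FL φ z‖ ≤ C2 := by
    refine le_trans ?_ hz2
    have hp : 1 ≤ 2 * Real.pi := by linarith [Real.pi_gt_three]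
    have : 0 ≤ ‖z‖ ^ 2 * ‖FL φ z‖ := by positivity
    have hpp : 1 ≤ (2 * Real.pi) * (2 * Real.pi) := by nlinarith
    calc ‖z‖ ^ 2 * ‖FL φ z‖ = 1 * (‖z‖ ^ 2 * ‖FL φ z‖) := by ring
      _ ≤ (2 * Real.pi) * (2 * Real.pi) * (‖z‖ ^ 2 * ‖FL φ z‖) := by gcongr
      _ = _ := by ring
  have := h0 z hz
  nlinarith [mul_le_mul_of_nonneg_right hx hn]

lemma FL_fourier (φ : ℝ → ℂ) (x : ℝ) : FourierTransform.fourier φ x = FL φ x := by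
  rw [Real.fourier_eq']
  unfold FL
  refine integral_congr_ae (ae_of_all _ fun t => ?_)
  simp only [smul_eq_mul, E]
  rw [mul_comm]
  congr 2
  simp
  ring

lemma line_int {φ : ℝ → ℂ} (hc : ContDiff ℝ 2 φ) (hs : HasCompactSupport φ) {s : ℝ}
    (hs1 : |s| ≤ 1) (c : ℝ → ℂ) (F : ℂ → ℂ) (hsum : Summable fun γ => ‖c γ * E γ (s * I)‖)
    (hF : ∀ x : ℝ, HasSum (fun γ => c γ * E γ (x + s * I)) (F (x + s * I))) :
    HasSum (fun γ => c γ * φ γ) (∫ x : ℝ, F (x + s * I) * FL φ (x + s * I)) := by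
  obtain ⟨C, -, hC⟩ := FL_adm hc hs
  set g : ℝ → ℂ := fun t => φ t * E (-t) (s * I) with hg
  have hgc : Continuous g := hc.continuous.mul (cont_E_fst _)
  have hgi : Integrable g := FL_int hc.continuous hs _
  have hgF : FourierTransform.fourier g = fun x : ℝ => FL φ (x + s * I) := by
    funext x
    rw [FL_fourier]
    unfold FL
    refine integral_congr_ae (ae_of_all _ fun t => ?_)
    simp only [hg]
    rw [E_add_arg]; ring
  have hFLint : Integrable fun x : ℝ => FL φ (x + s * I) := by
    refine Integrable.mono' (integrable_inv_one_add_sq.const_mul C) ?_ ?_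
    · have := (FL_diff hc.continuous hs).continuous
      exact Continuous.aestronglyMeasurable (by fun_prop)
    · refine ae_of_all _ fun x => ?_
      simpa using hC (x + s * I) (by simpa using hs1)
  have hinv : ∀ γ : ℝ, ∫ x : ℝ, E γ x * FL φ (x + s * I) = g γ := by
    intro γ
    have h1 := hgc.fourierInv_fourier_eq hgi (by rw [hgF]; exact hFLint)
    have h2 := congrFun h1 γ
    rw [← h2, Real.fourierInv_eq', hgF]
    refine integral_congr_ae (ae_of_all _ fun t => ?_)
    simp only [smul_eq_mul, E]
    congr 2
    simp
    ring
  have hnorm : ∀ (γ x : ℝ), ‖E γ x * FL φ (x + s * I)‖ = ‖FL φ (x + s * I)‖ := by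
    intro γ x; rw [norm_mul, norm_E_real, one_mul]
  have hEc : ∀ γ : ℝ, Continuous fun x : ℝ => E γ x := by
    intro γ
    fun_prop
  have key := hasSum_integral_gen (m := volume) (fun γ => c γ * E γ (s * I))
    (fun (γ : ℝ) (x : ℝ) => E γ x * FL φ (x + s * I)) hsum (∫ x : ℝ, ‖FL φ (x + s * I)‖)
    (fun γ => ?_) (fun γ => ?_)
  · refine hs_congr key (fun γ => ?_) ?_
    · rw [hinv γ]
      simp only [hg]
      linear_combination (-(c γ * φ γ)) * E_mul_neg γ (s * I)
    · refine integral_congr_ae (ae_of_all _ fun x => ?_)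
      simp only []
      rw [← ((hF x).mul_right (FL φ (x + s * I))).tsum_eq]
      refine tsum_congr fun γ => ?_
      rw [E_add_arg]; ring
  · refine hFLint.norm.mono' ?_ (ae_of_all _ fun x => (hnorm γ x).le)
    exact ((hEc γ).aestronglyMeasurable).mul hFLint.aestronglyMeasurable
  · simp only [hnorm]; exact le_rfl
end FQ

namespace FQ
variable {a : ℝ → ℂ} {M : ℝ}

lemma coeffs (h : Good a M) (hne : ∃ γ, a γ ≠ 0) (hr : ∀ z, D a z = 0 → z.im = 0)
    {k : ℝ → ℕ} (hk : Fac (D a) k) :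
    ∃ b : ℝ → ℂ, (∀ y : ℝ, 0 < y → Summable fun γ => ‖b γ‖ * Real.exp (-(2 * Real.pi * |γ| * y))) ∧
      (Summable fun γ : Set.Ioo (0:ℝ) 1 => ‖b γ‖ / (γ:ℝ)) ∧
      ∀ φ : ℝ → ℂ, ContDiff ℝ 2 φ → HasCompactSupport φ →
        ∑' x : ℝ, (k x : ℂ) * FL φ x = ∑' γ, b γ * φ γ := by
  obtain ⟨c, hc1, hc2, hc3, hc4⟩ := upper h hne (fun z hz h0 => hz.ne' (hr z h0))
  have hne' : ∃ γ, (fun γ => a (-γ)) γ ≠ 0 := by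
    obtain ⟨γ, hγ⟩ := hne; exact ⟨-γ, by simpa using hγ⟩
  obtain ⟨e, he1, he2, he3, -⟩ := upper h.flip hne' (fun z hz h0 => by
    rw [D_flip] at h0
    have := hr _ h0
    simp at this
    exact hz.ne' this)
  set d : ℝ → ℂ := fun γ => -e (-γ) with hd
  have hw : ‖(2 * Real.pi * I : ℂ)‖ = 2 * Real.pi := by simp [abs_of_pos Real.pi_pos]
  have hw0 : (2 * Real.pi * I : ℂ) ≠ 0 := by
    rw [← norm_pos_iff, hw]; positivity
  have hw1 : 1 ≤ 2 * Real.pi := by linarith [Real.pi_gt_three]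
  have hcs : ∀ y : ℝ, 0 < y → Summable fun γ => ‖c γ‖ * Real.exp (-(2 * Real.pi * |γ| * y)) := by
    intro y hy
    refine (hc1 y hy).congr fun γ => ?_
    rcases lt_or_ge γ 0 with hγ | hγ
    · simp [hc3 γ hγ]
    · rw [abs_of_nonneg hγ]
  have hds : ∀ y : ℝ, 0 < y → Summable fun γ => ‖d γ‖ * Real.exp (-(2 * Real.pi * |γ| * y)) := by
    intro y hy
    refine ((Equiv.neg ℝ).summable_iff.2 (he1 y hy)).congr fun γ => ?_
    simp only [Function.comp, Equiv.neg_apply, hd, norm_neg]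
    rcases lt_or_ge (-γ) 0 with hγ | hγ
    · simp [he3 _ hγ]
    · rw [← abs_neg γ, abs_of_nonneg hγ]
  have hble : ∀ γ, ‖(d γ - c γ) / (2 * Real.pi * I)‖ ≤ ‖d γ‖ + ‖c γ‖ := by
    intro γ
    rw [norm_div, hw]
    exact (div_le_self (norm_nonneg _) hw1).trans (norm_sub_le _ _)
  refine ⟨fun γ => (d γ - c γ) / (2 * Real.pi * I), ?_, ?_, ?_⟩
  · intro y hy
    refine Summable.of_nonneg_of_le (fun γ => by positivity) (fun γ => ?_) ((hds y hy).add (hcs y hy))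
    rw [← add_mul]
    exact mul_le_mul_of_nonneg_right (hble γ) (Real.exp_pos _).le
  · refine Summable.of_nonneg_of_le (fun γ => ?_) (fun γ => ?_) hc4
    · exact div_nonneg (norm_nonneg _) γ.2.1.le
    · refine div_le_div_of_nonneg_right ?_ γ.2.1.le
      have : d γ = 0 := by
        simp only [hd]; rw [he3 _ (by linarith [γ.2.1])]; simp
      have h2 := hble γ
      rw [this, norm_zero, zero_add] at h2
      simp only [this] at *
      exact h2
  · intro φ hφ hs
    obtain ⟨C, hC⟩ := FL_adm hφ hs
    have hmain := (limit_main h hne hr hk).2 _ _ hC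
    have up := line_int hφ hs (s := 1) (by simp) c (LF a) (by
      refine (hc1 1 one_pos).congr fun γ => ?_
      rw [norm_mul, norm_E]; simp) (fun x => hc2 _ (by simp))
    have dn := line_int hφ hs (s := -1) (by simp) d (LF a) (by
      refine ((Equiv.neg ℝ).summable_iff.2 (he1 1 one_pos)).congr fun γ => ?_
      simp only [Function.comp, Equiv.neg_apply, hd]
      rw [norm_mul, norm_E, norm_neg]; simp) (fun x => by
      have h1 := (he2 (-(x + (-1 : ℝ) * I)) (by simp)).neg
      rw [deriv_flip, D_flip, neg_neg, neg_div, neg_neg] at h1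
      have h2 := (Equiv.neg ℝ).hasSum_iff.2 h1
      refine hs_congr h2 (fun γ => ?_) rfl
      simp only [Function.comp, Equiv.neg_apply, hd]
      rw [E_neg, neg_neg]; ring)
    have hs2 := (dn.sub up).mul_left ((2 * Real.pi * I : ℂ)⁻¹)
    have e1 : ∀ x : ℝ, (x : ℂ) + ((-1 : ℝ) : ℂ) * I = x - I := fun x => by push_cast; ring
    have e2 : ∀ x : ℝ, (x : ℂ) + ((1 : ℝ) : ℂ) * I = x + I := fun x => by push_cast; ring
    simp only [e1, e2] at hs2
    rw [← hmain, inv_mul_cancel_left₀ hw0] at hs2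
    rw [← hs2.tsum_eq]
    refine tsum_congr fun γ => ?_
    change _ = (d γ - c γ) / (2 * Real.pi * I) * φ γ
    rw [div_eq_mul_inv]; ring

lemma var_le (b : PPM ℝ)
    (hb : ∀ y : ℝ, 0 < y → Summable fun γ => ‖b.mass γ‖ * Real.exp (-(2 * Real.pi * |γ| * y)))
    {y : ℝ} (hy : 0 < y) (r : ℝ) :
    b.var (ball 0 r) ≤ ENNReal.ofReal ((∑' γ, ‖b.mass γ‖ * Real.exp (-(2 * Real.pi * |γ| * y)))
      * Real.exp (2 * Real.pi * y * r)) := by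
  rw [← tsum_mul_right, ENNReal.ofReal_tsum_of_nonneg (fun γ => by positivity)
    ((hb y hy).mul_right _)]
  unfold PPM.var
  refine le_trans (ENNReal.tsum_le_tsum (g := fun x : ball (0:ℝ) r => ENNReal.ofReal
    (‖b.mass x‖ * Real.exp (-(2 * Real.pi * |(x:ℝ)| * y)) * Real.exp (2 * Real.pi * y * r))) ?_)
    (ENNReal.tsum_comp_le_tsum_of_injective Subtype.val_injective
      (fun x : ℝ => ENNReal.ofReal
    (‖b.mass x‖ * Real.exp (-(2 * Real.pi * |(x:ℝ)| * y)) * Real.exp (2 * Real.pi * y * r))))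
  intro x
  rw [← enorm_eq_nnnorm, ← ofReal_norm]
  refine ENNReal.ofReal_le_ofReal ?_
  rw [mul_assoc, ← Real.exp_add]
  refine le_mul_of_one_le_right (norm_nonneg _) (Real.one_le_exp ?_)
  have hx : |(x : ℝ)| < r := by
    have := x.2
    rwa [mem_ball_zero_iff, Real.norm_eq_abs] at this
  have : 0 ≤ 2 * Real.pi * y * (r - |(x : ℝ)|) :=
    mul_nonneg (by positivity) (by linarith)
  linarith

theorem final (q : ℕ → ℂ) (ω : ℕ → ℝ)
    (hq : Summable fun i => ‖q i‖) (hω : IsBounded (Set.range ω))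
    (hne : ∃ z : ℂ, dserC q ω z ≠ 0)
    (hreal : ∀ z : ℂ, dserC q ω z = 0 → z.im = 0)
    (μ : PPM ℝ) (hμ : IsZeroCounting (dserC q ω) μ) :
    μ.temperate ∧
    ∃ νh : PPM ℝ, IsFT μ νh ∧ νh.locFinite ∧
      (∑' γ : (Set.Ioo (0:ℝ) 1), (‖νh.mass γ‖₊ : ℝ≥0∞) / ENNReal.ofReal (γ : ℝ) < ⊤) ∧
      (∀ ε : ℝ, 0 < ε → ∀ᶠ r : ℝ in atTop,
        νh.var (ball (0:ℝ) r) ≤ ENNReal.ofReal (Real.exp (ε * r))) := by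
  obtain ⟨M, hM⟩ := hω.exists_norm_le
  have hM' : ∀ i, |ω i| ≤ M := fun i => by
    simpa using hM (ω i) (Set.mem_range_self i)
  have hM0 : 0 ≤ M := (abs_nonneg _).trans (hM' 0)
  obtain ⟨a, ha1, ha2, -, ha4⟩ := canon (S := {x : ℝ | |x| ≤ M}) (q := q) (w := ω) hM' hq
  have hg : Good a M := ⟨ha2, ha1⟩
  have hD : dserC q ω = D a := by
    funext z
    have hsum : Summable fun i => q i * E (ω i) z := by
      refine Summable.of_norm_bounded (hq.mul_right (Real.exp (2 * Real.pi * |z.im| * M)))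
        fun i => ?_
      rw [norm_mul]
      refine mul_le_mul_of_nonneg_left ?_ (norm_nonneg _)
      have := norm_E_le' (z := z) le_rfl (-ω i)
      rw [neg_neg, abs_neg] at this
      refine this.trans (Real.exp_le_exp.2 ?_)
      exact mul_le_mul_of_nonneg_left (hM' i) (by positivity)
    have h1 : HasSum (fun γ => a γ * E γ z) (∑' i, q i * E (ω i) z) :=
      ha4 (fun γ => E γ z) _ hsum.hasSum
    exact h1.tsum_eq.symm
  rw [hD] at hne hreal hμ
  have hne' : ∃ γ, a γ ≠ 0 := by
    by_contra hc
    push Not at hc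
    obtain ⟨z, hz⟩ := hne
    exact hz (by simp [D, hc])
  choose k g hk1 hk2 hk3 hk4 using hμ
  have hk : Fac (D a) k := fun x =>
    ⟨g x, fun z => (hk2 x z).differentiableAt, hk3 x, hk4 x⟩
  obtain ⟨b, hb1, hb2, hb3⟩ := coeffs hg hne' hreal hk
  refine ⟨fun φ => ?_, ?_⟩
  · obtain ⟨C0, hC0, h0⟩ := φ.decay 0 0
    obtain ⟨C2, hC2, h2⟩ := φ.decay 2 0
    refine Summable.of_norm_bounded ((limit_main hg hne' hreal hk).1.mul_left (C0 + C2))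
      fun x => ?_
    rw [hk1, norm_mul, Complex.norm_natCast, mul_left_comm]
    refine mul_le_mul_of_nonneg_left ?_ (by positivity)
    rw [← div_eq_mul_inv, le_div_iff₀ (by positivity)]
    have p0 := h0 x
    have p2 := h2 x
    rw [norm_iteratedFDeriv_zero] at p0 p2
    rw [Real.norm_eq_abs, sq_abs] at p2
    simp only [pow_zero, one_mul] at p0
    linarith
  have hcount : (Function.support b).Countable := by
    refine ((hb1 1 one_pos).countable_support).mono fun γ hγ => ?_
    rw [Function.mem_support] at hγ ⊢
    have := norm_pos_iff.2 hγ
    positivity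
  refine ⟨⟨b, hcount⟩, ?_, ?_, ?_, ?_⟩
  · intro φ hφ
    unfold PPM.pair
    simp only [hk1]
    rw [← hb3 φ (φ.smooth 2) hφ]
    refine tsum_congr fun x => ?_
    rw [FourierTransform.fourierCLE_apply, SchwartzMap.fourier_coe, FL_fourier]
  · intro r
    exact (var_le ⟨b, hcount⟩ hb1 one_pos r).trans_lt ENNReal.ofReal_lt_top
  · refine lt_of_eq_of_lt ?_ hb2.tsum_ofReal_lt_top
    refine tsum_congr fun γ => ?_
    rw [ENNReal.ofReal_div_of_pos γ.2.1, ofReal_norm, enorm_eq_nnnorm]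
  · intro ε hε
    set y := ε / (4 * Real.pi) with hy
    have hyp : 0 < y := by positivity
    set S := ∑' γ, ‖b γ‖ * Real.exp (-(2 * Real.pi * |γ| * y)) with hS
    have ht : Tendsto (fun r : ℝ => Real.exp (ε / 2 * r)) atTop atTop :=
      Real.tendsto_exp_atTop.comp (tendsto_id.const_mul_atTop (by positivity))
    filter_upwards [ht.eventually_ge_atTop S] with r hr
    refine (var_le ⟨b, hcount⟩ hb1 hyp r).trans (ENNReal.ofReal_le_ofReal ?_)
    change S * _ ≤ _
    have e1 : 2 * Real.pi * y * r = ε / 2 * r := by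
      rw [hy]; field_simp; ring
    have e2 : ε * r = ε / 2 * r + ε / 2 * r := by ring
    rw [e1, e2, Real.exp_add]
    exact mul_le_mul_of_nonneg_right hr (Real.exp_pos _).le
end FQ

/-- **necessity in Theorem 5.** Let `Q(z) = Σ_{ω∈Ω} q_ω e^{2πi z ω}` be a
Dirichlet series with `Σ|q_ω| < ∞` and bounded countable spectrum, not identically zero,
with only real zeros, and let `μ_A` be the counting measure of its zero multiset `A`
(zeros with multiplicities). Then `μ_A` is temperate and its Fourier transform is a pure
point measure `μ̂_A = Σ_γ b_γ δ_γ` satisfying `Σ_{0<γ<1} |b_γ|/γ < ∞` and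
`log |μ̂_A|(B(0,r)) = o(r)` as `r → ∞`. -/
theorem statement8 (q : ℕ → ℂ) (ω : ℕ → ℝ)
    (hq : Summable fun i => ‖q i‖) (hω : IsBounded (Set.range ω))
    (hne : ∃ z : ℂ, dserC q ω z ≠ 0)
    (hreal : ∀ z : ℂ, dserC q ω z = 0 → z.im = 0)
    (μ : PPM ℝ) (hμ : IsZeroCounting (dserC q ω) μ) :
    μ.temperate ∧
    ∃ νh : PPM ℝ, IsFT μ νh ∧ νh.locFinite ∧
      (∑' γ : (Set.Ioo (0:ℝ) 1), (‖νh.mass γ‖₊ : ℝ≥0∞) / ENNReal.ofReal (γ : ℝ) < ⊤) ∧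
      (∀ ε : ℝ, 0 < ε → ∀ᶠ r : ℝ in atTop,
        νh.var (ball (0:ℝ) r) ≤ ENNReal.ofReal (Real.exp (ε * r))) := by
  exact FQ.final q ω hq hω hne hreal μ hμ

end
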